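/- arXiv:2401.04019 — 10 statements merged into one kernel-verified Lean document; each statement's English description precedes it below -/
import Mathlib

section
/- For every integer n ≥ 1, |D_5(n)| = |C_{1,2}(n)| + |C_{3,4}(n − 1)|. -/
/-- `D5 n` is the number of partitions of `n` into distinct parts, none divisible by 5.
A partition is a multiset of positive parts. -/
noncomputable def D5 (n : ℕ) : ℕ :=
  Nat.card {s : Multiset ℕ // s.sum = n ∧ s.Nodup ∧ ∀ a ∈ s, 0 < a ∧ ¬ 5 ∣ a}

/-- `Cab a b n` is the number of pairs `(λ, μ)` of partitions with `|λ| + |μ| = n`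
such that `λ` has distinct parts, none congruent to `±a` or `±b` mod `10`, and `μ`
has distinct parts, all divisible by `5`. -/
noncomputable def Cab (a b : ℕ) (n : ℕ) : ℕ :=
  Nat.card {lm : Multiset ℕ × Multiset ℕ //
    lm.1.sum + lm.2.sum = n ∧
    lm.1.Nodup ∧
    (∀ x ∈ lm.1, 0 < x ∧ x % 10 ≠ a % 10 ∧ x % 10 ≠ (10 - a) % 10 ∧
      x % 10 ≠ b % 10 ∧ x % 10 ≠ (10 - b) % 10) ∧
    lm.2.Nodup ∧ (∀ x ∈ lm.2, 0 < x ∧ 5 ∣ x)}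

namespace JT

def gb {R : Type*} [CommRing R] (Q : R) : ℕ → ℕ → R
  | _, 0 => 1
  | 0, _ + 1 => 0
  | n + 1, k + 1 => gb Q n k + Q ^ (k + 1) * gb Q n (k + 1)

variable {R : Type*} [CommRing R]

lemma gb_zero (Q : R) (n : ℕ) : gb Q n 0 = 1 := by cases n <;> simp [gb]

lemma gb_gt (Q : R) : ∀ n k : ℕ, n < k → gb Q n k = 0
  | _, 0, h => by omega
  | 0, _ + 1, _ => by simp [gb]
  | n + 1, k + 1, h => by
    rw [gb, gb_gt Q n k (by omega), gb_gt Q n (k + 1) (by omega)]; simp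

lemma gb_map {S : Type*} [CommRing S] (f : R →+* S) (Q : R) :
    ∀ n k : ℕ, f (gb Q n k) = gb (f Q) n k
  | n, 0 => by simp [gb_zero]
  | 0, _ + 1 => by simp [gb]
  | n + 1, k + 1 => by
    rw [gb, gb, map_add, map_mul, map_pow, gb_map f Q n k, gb_map f Q n (k + 1)]

lemma qbinom (Q y : R) (n : ℕ) : ∀ x : R,
    ∏ i ∈ Finset.range n, (y + x * Q ^ i) =
      ∑ k ∈ Finset.range (n + 1), gb Q n k * Q ^ (k.choose 2) * x ^ k * y ^ (n - k) := by
  induction n with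
  | zero => intro x; simp [gb]
  | succ n ih =>
    intro x
    rw [Finset.prod_range_succ']
    have h1 : ∏ i ∈ Finset.range n, (y + x * Q ^ (i + 1)) =
        ∏ i ∈ Finset.range n, (y + (x * Q) * Q ^ i) :=
      Finset.prod_congr rfl fun i _ => by ring
    rw [h1, ih, Finset.sum_range_succ' _ (n + 1)]
    have h2 : ∀ k ∈ Finset.range (n + 1),
        gb Q (n + 1) (k + 1) * Q ^ ((k + 1).choose 2) * x ^ (k + 1) * y ^ (n + 1 - (k + 1)) =
        x * (gb Q n k * Q ^ (k.choose 2) * (x * Q) ^ k * y ^ (n - k)) +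
        gb Q n (k + 1) * Q ^ ((k + 1).choose 2) * (x * Q) ^ (k + 1) * y ^ (n - k) := by
      intro k _
      have : (k + 1).choose 2 = k + k.choose 2 := by
        rw [Nat.choose_succ_succ' k 1]; simp
      rw [gb, this, Nat.add_sub_add_right]
      ring
    rw [Finset.sum_congr rfl h2, Finset.sum_add_distrib, ← Finset.mul_sum]
    have h3 : ∑ k ∈ Finset.range (n + 1),
          gb Q n (k + 1) * Q ^ ((k + 1).choose 2) * (x * Q) ^ (k + 1) * y ^ (n - k)
          + gb Q (n + 1) 0 * Q ^ (Nat.choose 0 2) * x ^ 0 * y ^ (n + 1 - 0) =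
        y * ∑ k ∈ Finset.range (n + 1), gb Q n k * Q ^ (k.choose 2) * (x * Q) ^ k * y ^ (n - k) := by
      rw [Finset.sum_range_succ, gb_gt Q n (n + 1) (by omega), Finset.sum_range_succ' _ n,
        mul_add, Finset.mul_sum]
      simp only [gb_zero, zero_mul, add_zero]
      congr 1
      · refine Finset.sum_congr rfl fun k hk => ?_
        have := Finset.mem_range.1 hk
        rw [show n - k = (n - (k + 1)) + 1 by omega]
        ring
      · simp; ring
    rw [add_assoc, h3]
    ring

lemma gb_poch (Q : R) : ∀ k m : ℕ,
    (∏ i ∈ Finset.range k, (1 - Q ^ (i + 1))) * (∏ i ∈ Finset.range m, (1 - Q ^ (i + 1)))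
      * gb Q (k + m) k = ∏ i ∈ Finset.range (k + m), (1 - Q ^ (i + 1))
  | 0, m => by simp [gb_zero]
  | k + 1, 0 => by
    have h := gb_poch Q k 0
    simp only [Finset.range_zero, Finset.prod_empty, mul_one, add_zero] at h ⊢
    rw [gb, gb_gt Q k (k + 1) (by omega), Finset.prod_range_succ]
    linear_combination (1 - Q ^ (k + 1)) * h
  | k + 1, m + 1 => by
    have h1 := gb_poch Q k (m + 1)
    have h2 := gb_poch Q (k + 1) m
    rw [show k + 1 + (m + 1) = (k + m + 1) + 1 by ring, gb, Finset.prod_range_succ _ (k + m + 1)]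
    rw [show k + (m + 1) = k + m + 1 by ring] at h1
    rw [show k + 1 + m = k + m + 1 by ring] at h2
    rw [Finset.prod_range_succ _ m] at h1 ⊢
    rw [Finset.prod_range_succ _ k] at h2 ⊢
    linear_combination (1 - Q ^ (k + 1)) * h1 + Q ^ (k + 1) * (1 - Q ^ (m + 1)) * h2

open Polynomial in
lemma finJTP (a b N : ℕ) (e : ℤ → ℕ)
    (he : ∀ m : ℤ, 2 * (e m : ℤ) = (a + b) * (m * (m - 1)) + 2 * a * m) :
    ∑ k ∈ Finset.range (2 * N + 1),
      gb ((X : ℤ[X]) ^ (a + b)) (2 * N) k * X ^ (e ((k : ℤ) - N)) =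
    ∏ i ∈ Finset.range N, ((1 + X ^ ((a + b) * i + a)) * (1 + X ^ ((a + b) * i + b))) := by
  have h := qbinom ((X : ℤ[X]) ^ (a + b)) (X ^ ((a + b) * N)) (2 * N) (X ^ a)
  set D := (a + b) * N * N + a * N + (a + b) * N.choose 2 with hD
  have hc : ∀ k : ℕ, 2 * (k.choose 2 : ℤ) = k * (k - 1) := by
    intro k
    induction k with
    | zero => simp
    | succ k ih =>
      have : (k + 1).choose 2 = k + k.choose 2 := by
        rw [Nat.choose_succ_succ' k 1]; simp
      rw [this]; push_cast; linarith
  have hX : (X : ℤ[X]) ^ D ≠ 0 := pow_ne_zero _ X_ne_zero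
  apply mul_left_cancel₀ hX
  have hL : (X : ℤ[X]) ^ D * ∑ k ∈ Finset.range (2 * N + 1),
      gb ((X : ℤ[X]) ^ (a + b)) (2 * N) k * X ^ (e ((k : ℤ) - N)) =
      ∏ i ∈ Finset.range (2 * N), (X ^ ((a + b) * N) + X ^ a * (X ^ (a + b)) ^ i) := by
    rw [h, Finset.mul_sum]
    refine Finset.sum_congr rfl fun k hk => ?_
    have hk' := Finset.mem_range.1 hk
    have hexp : D + e ((k : ℤ) - N) =
        (a + b) * k.choose 2 + a * k + (a + b) * N * (2 * N - k) := by
      zify [show k ≤ 2 * N by omega]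
      rw [hD]; push_cast
      have h1 := he ((k : ℤ) - N)
      have h2 := hc k
      have h3 := hc N
      have : (2:ℤ) ≠ 0 := by norm_num
      apply mul_left_cancel₀ this
      linear_combination h1 + ((a:ℤ) + b) * h3 - ((a:ℤ) + b) * h2
    have : (X : ℤ[X]) ^ D * X ^ e ((k : ℤ) - N) =
        X ^ ((a + b) * k.choose 2) * X ^ (a * k) * X ^ ((a + b) * N * (2 * N - k)) := by
      rw [← pow_add, hexp, pow_add, pow_add]
    rw [← pow_mul, ← pow_mul, ← pow_mul]
    linear_combination gb ((X : ℤ[X]) ^ (a + b)) (2 * N) k * this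
  rw [hL, two_mul, Finset.prod_range_add, Finset.prod_mul_distrib]
  have hB : ∏ i ∈ Finset.range N, ((X : ℤ[X]) ^ ((a + b) * N) + X ^ a * (X ^ (a + b)) ^ (N + i)) =
      X ^ ((a + b) * N * N) * ∏ i ∈ Finset.range N, (1 + X ^ ((a + b) * i + a)) := by
    have h1 : (X : ℤ[X]) ^ ((a + b) * N * N) =
        ∏ i ∈ Finset.range N, X ^ ((a + b) * N) := by
      rw [Finset.prod_const, Finset.card_range, pow_mul _ _ N]
    rw [h1, ← Finset.prod_mul_distrib]
    refine Finset.prod_congr rfl fun i _ => ?_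
    ring
  have hA : ∏ i ∈ Finset.range N, ((X : ℤ[X]) ^ ((a + b) * N) + X ^ a * (X ^ (a + b)) ^ i) =
      X ^ (a * N + (a + b) * N.choose 2) *
        ∏ i ∈ Finset.range N, (1 + X ^ ((a + b) * i + b)) := by
    have h1 : (X : ℤ[X]) ^ (a * N + (a + b) * N.choose 2) =
        ∏ i ∈ Finset.range N, X ^ (a + (a + b) * i) := by
      rw [Finset.prod_pow_eq_pow_sum, Finset.sum_add_distrib, ← Finset.mul_sum,
        Finset.sum_range_id, ← Nat.choose_two_right]
      simp [mul_comm]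
    rw [h1, ← Finset.prod_range_reflect (fun i => 1 + (X : ℤ[X]) ^ ((a + b) * i + b)),
      ← Finset.prod_mul_distrib]
    refine Finset.prod_congr rfl fun i hi => ?_
    have hi' := Finset.mem_range.1 hi
    obtain ⟨j, rfl⟩ : ∃ j, N = i + 1 + j := ⟨N - (i + 1), by omega⟩
    rw [show i + 1 + j - 1 - i = j by omega]
    ring
  rw [hA, hB, hD, add_assoc, pow_add _ ((a + b) * N * N)]
  ring

lemma prod_one_stab (K : ℕ) (q : R) (hq : q ^ K = 0) (c : R) (f : ℕ → ℕ) (hf : ∀ i, i < f i)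
    (j : ℕ) (hj : K ≤ j) :
    ∏ i ∈ Finset.range j, (1 + c * q ^ (f i)) = ∏ i ∈ Finset.range K, (1 + c * q ^ (f i)) := by
  obtain ⟨l, rfl⟩ := Nat.exists_eq_add_of_le hj
  rw [Finset.prod_range_add]
  rw [Finset.prod_eq_one (s := Finset.range l), mul_one]
  intro i _
  rw [pow_eq_zero_of_le (by have := hf (K + i); omega) hq]; simp

lemma isUnit_E (K : ℕ) (q : R) (hq : q ^ K = 0) (s j : ℕ) (hs : 0 < s) :
    IsUnit (∏ i ∈ Finset.range j, (1 - q ^ (s * (i + 1)))) := by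
  rw [IsUnit.prod_iff]
  intro i _
  apply IsNilpotent.isUnit_one_sub
  exact IsNilpotent.pow_of_pos ⟨K, hq⟩ (by positivity)

lemma e_bound (a b : ℕ) (ha : 0 < a) (hb : 0 < b) (e : ℤ → ℕ)
    (he : ∀ m : ℤ, 2 * (e m : ℤ) = (a + b) * (m * (m - 1)) + 2 * a * m) (m : ℤ) :
    |m| ≤ e m := by
  have h := he m
  have ha' : (1:ℤ) ≤ a := by exact_mod_cast ha
  have hb' : (1:ℤ) ≤ b := by exact_mod_cast hb
  rcases le_or_gt 1 m with hm | hm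
  · rw [abs_of_pos (by omega)]
    have : 0 ≤ ((a:ℤ) + b) * (m * (m - 1)) :=
      mul_nonneg (by omega) (mul_nonneg (by omega) (by omega))
    nlinarith
  · rw [abs_of_nonpos (by omega)]
    have : 0 ≤ ((a:ℤ) + b) * ((-m) * (-m - 1)) ∨ m = 0 := by
      rcases eq_or_ne m 0 with h0 | h0
      · exact Or.inr h0
      · exact Or.inl (mul_nonneg (by omega) (mul_nonneg (by omega) (by omega)))
    rcases this with h1 | h1
    · nlinarith
    · omega

lemma JTP (K : ℕ) (q : R) (hq : q ^ K = 0) (a b : ℕ) (ha : 0 < a) (hb : 0 < b) (e : ℤ → ℕ)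
    (he : ∀ m : ℤ, 2 * (e m : ℤ) = (a + b) * (m * (m - 1)) + 2 * a * m) :
    (∏ i ∈ Finset.range (2 * K), (1 - q ^ ((a + b) * (i + 1)))) *
    ∏ i ∈ Finset.range (2 * K), ((1 + q ^ ((a + b) * i + a)) * (1 + q ^ ((a + b) * i + b))) =
    ∑ m ∈ Finset.Icc (-(2 * K : ℕ) : ℤ) (2 * K : ℕ), q ^ (e m) := by
  have h := congrArg (Polynomial.eval₂RingHom (Int.castRingHom R) q) (finJTP a b (2 * K) e he)
  simp only [map_sum, map_prod, map_mul, map_add, map_pow, map_one, gb_map,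
    Polynomial.coe_eval₂RingHom, Polynomial.eval₂_X] at h
  rw [← h, Finset.mul_sum]
  symm
  refine Finset.sum_bij' (fun m _ => (m + (2 * K : ℕ)).toNat) (fun k _ => (k : ℤ) - (2 * K : ℕ))
    ?_ ?_ ?_ ?_ ?_
  · intro m hm; simp only [Finset.mem_Icc, Finset.mem_range] at *; omega
  · intro m hm; simp only [Finset.mem_Icc, Finset.mem_range] at *; omega
  · intro m hm; simp only [Finset.mem_Icc] at *; omega
  · intro m hm; simp only [Finset.mem_range] at *; omega
  intro m hm
  simp only [Finset.mem_Icc] at hm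
  have hk : (((m + (2 * K : ℕ)).toNat : ℕ) : ℤ) - (2 * K : ℕ) = m := by omega
  rw [hk]
  by_cases hbig : K ≤ e m
  · rw [pow_eq_zero_of_le hbig hq]; simp
  have hb1 := e_bound a b ha hb e he m
  have hm1 : |m| < K := by omega
  rw [abs_lt] at hm1
  set k := (m + (2 * K : ℕ)).toNat with hkdef
  have hk1 : K ≤ k := by omega
  obtain ⟨l, hl⟩ : ∃ l, 2 * (2 * K) = k + l := ⟨2 * (2 * K) - k, by omega⟩
  have hl1 : K ≤ l := by omega
  have hp := gb_poch (q ^ (a + b)) k l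
  simp only [← pow_mul] at hp
  have stab : ∀ j, K ≤ j → ∏ i ∈ Finset.range j, (1 - q ^ ((a + b) * (i + 1))) =
      ∏ i ∈ Finset.range K, (1 - q ^ ((a + b) * (i + 1))) := by
    intro j hj
    have := prod_one_stab K q hq (-1) (fun i => (a + b) * (i + 1)) (by intro i; nlinarith) j hj
    simpa only [neg_one_mul, ← sub_eq_add_neg] using this
  rw [stab k hk1, stab l hl1, stab (k + l) (by omega)] at hp
  rw [stab (2 * K) (by omega), hl]
  have hu := isUnit_E K q hq (a + b) K (by omega)
  have : (∏ i ∈ Finset.range K, (1 - q ^ ((a + b) * (i + 1)))) * gb (q ^ (a + b)) (k + l) k = 1 := by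
    apply hu.mul_left_cancel
    rw [← mul_assoc, hp, mul_one]
  rw [← mul_assoc, this, one_mul]

def ee (a b : ℕ) (m : ℤ) : ℕ := ((a + b) * (m * (m - 1) / 2) + a * m).toNat

lemma ee_spec (a b : ℕ) (m : ℤ) :
    2 * (ee a b m : ℤ) = (a + b) * (m * (m - 1)) + 2 * a * m := by
  have h2 : 2 * (m * (m - 1) / 2) = m * (m - 1) := by
    apply Int.mul_ediv_cancel'
    exact (Int.even_mul_pred_self m).two_dvd
  have hnn : 0 ≤ ((a:ℤ) + b) * (m * (m - 1) / 2) + a * m := by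
    have : 0 ≤ 2 * (((a:ℤ) + b) * (m * (m - 1) / 2) + a * m) := by
      have e1 : 2 * (((a:ℤ) + b) * (m * (m - 1) / 2) + a * m) =
        a * (m * (m + 1)) + b * (m * (m - 1)) := by linear_combination ((a:ℤ) + b) * h2
      rw [e1]
      have h3 : 0 ≤ m * (m + 1) := by
        rcases le_or_gt 0 m with h | h <;> nlinarith
      have h4 : 0 ≤ m * (m - 1) := by
        rcases le_or_gt 1 m with h | h <;> nlinarith
      positivity
    omega
  rw [ee, Int.toNat_of_nonneg hnn]
  linear_combination ((a:ℤ) + b) * h2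

lemma lattice (K : ℕ) (q : R) (hq : q ^ K = 0) (I : Finset ℤ)
    (hI : I = Finset.Icc (-(2 * K : ℕ) : ℤ) (2 * K : ℕ)) :
    (∑ m ∈ I, q ^ ee 1 4 m) * (∑ m ∈ I, q ^ ee 2 3 m) =
    (∑ m ∈ I, q ^ ee 3 7 m) * (∑ m ∈ I, q ^ ee 4 6 m) +
    q * ((∑ m ∈ I, q ^ ee 1 9 m) * (∑ m ∈ I, q ^ ee 2 8 m)) := by
  have hz : ∀ n, q ^ n ≠ 0 → n < K := by
    intro n hn
    by_contra hc
    exact hn (pow_eq_zero_of_le (by omega) hq)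
  have hbd : ∀ a b : ℕ, 0 < a → 0 < b → ∀ m : ℤ, |m| ≤ ee a b m :=
    fun a b ha hb m => e_bound a b ha hb _ (ee_spec a b) m
  simp only [Finset.sum_mul_sum, ← Finset.sum_product', ← pow_add]
  simp only [Finset.mul_sum, ← pow_succ']
  rw [← Finset.sum_filter_add_sum_filter_not _ (fun p : ℤ × ℤ => (p.1 + p.2) % 2 = 0)]
  congr 1
  · symm
    refine Finset.sum_bij_ne_zero (fun p _ _ => (p.1 + p.2, p.1 - p.2)) ?_ ?_ ?_ ?_
    · rintro ⟨u, v⟩ _ h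
      have h1 := hz _ h
      have h2 := hbd 3 7 (by norm_num) (by norm_num) u
      have h3 := hbd 4 6 (by norm_num) (by norm_num) v
      simp only [Finset.mem_filter, Finset.mem_product, hI, Finset.mem_Icc] at *
      rw [abs_le] at h2 h3
      omega
    · rintro ⟨u, v⟩ _ _ ⟨u', v'⟩ _ _ h
      simp only [Prod.mk.injEq] at *
      omega
    · rintro ⟨m, n⟩ hmn h
      have h1 := hz _ h
      have h2 := hbd 1 4 (by norm_num) (by norm_num) m
      have h3 := hbd 2 3 (by norm_num) (by norm_num) n
      simp only [Finset.mem_filter, Finset.mem_product, hI, Finset.mem_Icc] at hmn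
      obtain ⟨v, hv⟩ : ∃ v, m + n = 2 * v := ⟨(m + n) / 2, by omega⟩
      have hm : m = v + (v - n) := by omega
      refine ⟨(v, v - n), ?_, ?_, ?_⟩
      · simp only [Finset.mem_product, hI, Finset.mem_Icc]
        simp only [abs_le] at h2 h3
        omega
      · convert h using 2
        have e1 := ee_spec 3 7 v
        have e2 := ee_spec 4 6 (v - n)
        have e3 := ee_spec 1 4 m
        have e4 := ee_spec 2 3 n
        rw [hm] at e3 ⊢
        push_cast at *
        zify
        linarith
      · simp only [Prod.mk.injEq]; omega
    · rintro ⟨u, v⟩ _ _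
      dsimp only
      congr 1
      have e1 := ee_spec 3 7 u
      have e2 := ee_spec 4 6 v
      have e3 := ee_spec 1 4 (u + v)
      have e4 := ee_spec 2 3 (u - v)
      push_cast at *
      zify
      linarith
  · symm
    refine Finset.sum_bij_ne_zero (fun p _ _ => (-p.2 - p.1 + 1, -p.2 + p.1)) ?_ ?_ ?_ ?_
    · rintro ⟨u, v⟩ _ h
      have h1 := hz _ h
      have h2 := hbd 1 9 (by norm_num) (by norm_num) u
      have h3 := hbd 2 8 (by norm_num) (by norm_num) v
      simp only [Finset.mem_filter, Finset.mem_product, hI, Finset.mem_Icc] at *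
      rw [abs_le] at h2 h3
      omega
    · rintro ⟨u, v⟩ _ _ ⟨u', v'⟩ _ _ h
      simp only [Prod.mk.injEq] at *
      omega
    · rintro ⟨m, n⟩ hmn h
      have h1 := hz _ h
      have h2 := hbd 1 4 (by norm_num) (by norm_num) m
      have h3 := hbd 2 3 (by norm_num) (by norm_num) n
      simp only [Finset.mem_filter, Finset.mem_product, hI, Finset.mem_Icc] at hmn
      obtain ⟨v, hv⟩ : ∃ v, m + n = 1 - 2 * v := ⟨(1 - m - n) / 2, by omega⟩
      have hm : m = 1 - 2 * v - n := by omega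
      refine ⟨(n + v, v), ?_, ?_, ?_⟩
      · simp only [Finset.mem_product, hI, Finset.mem_Icc]
        simp only [abs_le] at h2 h3
        omega
      · convert h using 2
        have e1 := ee_spec 1 9 (n + v)
        have e2 := ee_spec 2 8 v
        have e3 := ee_spec 1 4 m
        have e4 := ee_spec 2 3 n
        rw [hm] at e3 ⊢
        push_cast at *
        zify
        linarith
      · simp only [Prod.mk.injEq]; omega
    · rintro ⟨u, v⟩ _ _
      dsimp only
      congr 1
      have e1 := ee_spec 1 9 u
      have e2 := ee_spec 2 8 v
      have e3 := ee_spec 1 4 (-v - u + 1)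
      have e4 := ee_spec 2 3 (-v + u)
      push_cast at *
      zify
      linarith

lemma prod_blocks (s N : ℕ) (g : ℕ → R) :
    ∏ x ∈ Finset.range (s * N), g x =
      ∏ i ∈ Finset.range N, ∏ j ∈ Finset.range s, g (s * i + j) := by
  induction N with
  | zero => simp
  | succ N ih => rw [Nat.mul_succ, Finset.prod_range_add, ih, Finset.prod_range_succ]

def GP (P : ℕ → Prop) [DecidablePred P] (M : ℕ) (q : R) : R :=
  ∏ x ∈ Finset.range M, (if P (x + 1) then 1 + q ^ (x + 1) else 1)

lemma GP_stab (P : ℕ → Prop) [DecidablePred P] (K : ℕ) (q : R) (hq : q ^ K = 0)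
    (M : ℕ) (hM : K ≤ M) : GP P M q = GP P K q := by
  obtain ⟨l, rfl⟩ := Nat.exists_eq_add_of_le hM
  rw [GP, GP, Finset.prod_range_add]
  rw [Finset.prod_eq_one (s := Finset.range l), mul_one]
  intro i _
  rw [pow_eq_zero_of_le (by omega) hq]; simp

abbrev pC (a b : ℕ) (x : ℕ) : Prop :=
  x % 10 ≠ a % 10 ∧ x % 10 ≠ (10 - a) % 10 ∧ x % 10 ≠ b % 10 ∧ x % 10 ≠ (10 - b) % 10

lemma GP_five (N : ℕ) (q : R) : GP (fun x => 5 ∣ x) (5 * N) q =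
    ∏ i ∈ Finset.range N, (1 + q ^ (5 * (i + 1))) := by
  rw [GP, prod_blocks]
  refine Finset.prod_congr rfl fun i _ => ?_
  simp only [Finset.prod_range_succ, Finset.prod_range_zero]
  rw [if_neg (by omega), if_neg (by omega), if_neg (by omega), if_neg (by omega), if_pos (by omega)]
  simp [mul_add, add_assoc]

lemma GP_not_five (N : ℕ) (q : R) : GP (fun x => ¬ 5 ∣ x) (5 * N) q =
    (∏ i ∈ Finset.range N, ((1 + q ^ (5 * i + 1)) * (1 + q ^ (5 * i + 4)))) *
    ∏ i ∈ Finset.range N, ((1 + q ^ (5 * i + 2)) * (1 + q ^ (5 * i + 3))) := by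
  rw [GP, prod_blocks, ← Finset.prod_mul_distrib]
  refine Finset.prod_congr rfl fun i _ => ?_
  simp only [Finset.prod_range_succ, Finset.prod_range_zero]
  rw [if_pos (by omega), if_pos (by omega), if_pos (by omega), if_pos (by omega), if_neg (by omega)]
  ring

lemma GP_five' (N : ℕ) (q : R) : GP (fun x => 5 ∣ x) (10 * N) q =
    ∏ i ∈ Finset.range N, ((1 + q ^ (10 * i + 5)) * (1 + q ^ (10 * i + 10))) := by
  rw [GP, prod_blocks]
  refine Finset.prod_congr rfl fun i _ => ?_
  simp only [Finset.prod_range_succ, Finset.prod_range_zero]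
  rw [if_neg (by omega), if_neg (by omega), if_neg (by omega), if_neg (by omega), if_pos (by omega),
    if_neg (by omega), if_neg (by omega), if_neg (by omega), if_neg (by omega), if_pos (by omega)]
  ring

lemma GP_12 (N : ℕ) (q : R) : GP (pC 1 2) (10 * N) q =
    GP (fun x => 5 ∣ x) (10 * N) q *
    ((∏ i ∈ Finset.range N, ((1 + q ^ (10 * i + 3)) * (1 + q ^ (10 * i + 7)))) *
    ∏ i ∈ Finset.range N, ((1 + q ^ (10 * i + 4)) * (1 + q ^ (10 * i + 6)))) := by
  rw [GP_five', GP, prod_blocks, ← Finset.prod_mul_distrib, ← Finset.prod_mul_distrib]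
  refine Finset.prod_congr rfl fun i _ => ?_
  simp only [Finset.prod_range_succ, Finset.prod_range_zero, pC]
  rw [if_neg (by omega), if_neg (by omega), if_pos (by omega), if_pos (by omega), if_pos (by omega),
    if_pos (by omega), if_pos (by omega), if_neg (by omega), if_neg (by omega), if_pos (by omega)]
  ring

lemma GP_34 (N : ℕ) (q : R) : GP (pC 3 4) (10 * N) q =
    GP (fun x => 5 ∣ x) (10 * N) q *
    ((∏ i ∈ Finset.range N, ((1 + q ^ (10 * i + 1)) * (1 + q ^ (10 * i + 9)))) *
    ∏ i ∈ Finset.range N, ((1 + q ^ (10 * i + 2)) * (1 + q ^ (10 * i + 8)))) := by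
  rw [GP_five', GP, prod_blocks, ← Finset.prod_mul_distrib, ← Finset.prod_mul_distrib]
  refine Finset.prod_congr rfl fun i _ => ?_
  simp only [Finset.prod_range_succ, Finset.prod_range_zero, pC]
  rw [if_pos (by omega), if_pos (by omega), if_neg (by omega), if_neg (by omega), if_pos (by omega),
    if_neg (by omega), if_neg (by omega), if_pos (by omega), if_pos (by omega), if_pos (by omega)]
  ring

lemma main_id (K : ℕ) (q : R) (hq : q ^ K = 0) :
    GP (fun x => ¬ 5 ∣ x) K q =
      GP (pC 1 2) K q * GP (fun x => 5 ∣ x) K q +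
      q * (GP (pC 3 4) K q * GP (fun x => 5 ∣ x) K q) := by
  have j1 := JTP K q hq 1 4 (by norm_num) (by norm_num) _ (ee_spec 1 4)
  have j2 := JTP K q hq 2 3 (by norm_num) (by norm_num) _ (ee_spec 2 3)
  have j3 := JTP K q hq 3 7 (by norm_num) (by norm_num) _ (ee_spec 3 7)
  have j4 := JTP K q hq 4 6 (by norm_num) (by norm_num) _ (ee_spec 4 6)
  have j5 := JTP K q hq 1 9 (by norm_num) (by norm_num) _ (ee_spec 1 9)
  have j6 := JTP K q hq 2 8 (by norm_num) (by norm_num) _ (ee_spec 2 8)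
  have hl := lattice K q hq _ rfl
  norm_num only at j1 j2 j3 j4 j5 j6
  rw [← j1, ← j2, ← j3, ← j4, ← j5, ← j6] at hl
  have hE : ∏ i ∈ Finset.range (2 * K), (1 - q ^ (10 * (i + 1))) =
      (∏ i ∈ Finset.range (2 * K), (1 - q ^ (5 * (i + 1)))) *
      GP (fun x => 5 ∣ x) K q := by
    rw [← GP_stab _ K q hq (5 * (2 * K)) (by omega), GP_five, ← Finset.prod_mul_distrib]
    refine Finset.prod_congr rfl fun i _ => ?_
    ring
  have g1 := GP_12 (2 * K) q
  have g2 := GP_34 (2 * K) q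
  have g3 := GP_not_five (2 * K) q
  rw [GP_stab _ K q hq _ (by omega), GP_stab (fun x => 5 ∣ x) K q hq _ (by omega)] at g1 g2
  rw [GP_stab _ K q hq _ (by omega)] at g3
  rw [g1, g2, g3]
  rw [hE] at hl
  have hu := isUnit_E K q hq 5 (2 * K) (by omega)
  apply (hu.mul hu).mul_left_cancel
  linear_combination hl

def FF (P : ℕ → Prop) [DecidablePred P] (M : ℕ) : Finset ℕ := (Finset.Icc 1 M).filter P

lemma GP_sum (P : ℕ → Prop) [DecidablePred P] (M : ℕ) (q : R) :
    GP P M q = ∑ s ∈ (FF P M).powerset, q ^ (∑ x ∈ s, x) := by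
  have h : GP P M q = ∏ x ∈ FF P M, (1 + q ^ x) := by
    rw [GP, FF, Finset.prod_filter]
    refine Finset.prod_bij (fun x _ => x + 1) ?_ ?_ ?_ ?_
    · intro x hx; simp only [Finset.mem_range, Finset.mem_Icc] at *; omega
    · intro x _ y _ h; omega
    · intro y hy
      simp only [Finset.mem_Icc] at hy
      exact ⟨y - 1, by simp only [Finset.mem_range]; omega, by omega⟩
    · intro x _; rfl
  rw [h, Finset.prod_one_add]
  exact Finset.sum_congr rfl fun s _ => Finset.prod_pow_eq_pow_sum _ _ _

lemma mem_FF_of (P : ℕ → Prop) [DecidablePred P] (M : ℕ) (s : Multiset ℕ) (hs : s.sum ≤ M)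
    (h : ∀ x ∈ s, 0 < x ∧ P x) (hn : s.Nodup) :
    (⟨s, hn⟩ : Finset ℕ) ∈ (FF P M).powerset := by
  rw [Finset.mem_powerset]
  intro x hx
  have hx' : x ∈ s := hx
  have := Multiset.le_sum_of_mem hx'
  simp only [FF, Finset.mem_filter, Finset.mem_Icc]
  exact ⟨⟨(h x hx').1, by omega⟩, (h x hx').2⟩

lemma of_mem_FF (P : ℕ → Prop) [DecidablePred P] (M : ℕ) (s : Finset ℕ)
    (hs : s ∈ (FF P M).powerset) : ∀ x ∈ s.val, 0 < x ∧ P x := by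
  intro x hx
  have := Finset.mem_powerset.1 hs hx
  simp only [FF, Finset.mem_filter, Finset.mem_Icc] at this
  exact ⟨this.1.1, this.2⟩

lemma val_sum (s : Finset ℕ) : s.val.sum = ∑ x ∈ s, x := Finset.sum_val s

open Polynomial in
lemma D5_coeff (n M : ℕ) (hM : n ≤ M) :
    (D5 n : ℤ) = (GP (fun x => ¬ 5 ∣ x) M (X : ℤ[X])).coeff n := by
  rw [GP_sum, finsetSum_coeff]
  simp only [coeff_X_pow]
  rw [Finset.sum_boole, D5]
  congr 1
  rw [← Nat.card_eq_finsetCard]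
  symm
  refine Nat.card_congr (Equiv.ofBijective (fun s => ⟨s.1.val, ?_⟩) ⟨?_, ?_⟩)
  · have h := Finset.mem_filter.1 s.2
    exact ⟨by rw [val_sum]; exact h.2.symm, s.1.nodup, of_mem_FF _ M _ h.1⟩
  · rintro ⟨s, hs⟩ ⟨t, ht⟩ h
    simp only [Subtype.mk.injEq, Finset.val_inj] at h
    exact Subtype.ext h
  · rintro ⟨s, h1, h2, h3⟩
    refine ⟨⟨⟨s, h2⟩, Finset.mem_filter.2 ⟨mem_FF_of _ M s (by omega) h3 h2, ?_⟩⟩, rfl⟩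
    rw [← val_sum]; exact h1.symm

open Polynomial in
lemma Cab_coeff (a b n M : ℕ) (hM : n ≤ M) :
    (Cab a b n : ℤ) =
      (GP (pC a b) M (X : ℤ[X]) * GP (fun x => 5 ∣ x) M (X : ℤ[X])).coeff n := by
  rw [GP_sum, GP_sum, Finset.sum_mul_sum, ← Finset.sum_product']
  simp only [← pow_add]
  rw [finsetSum_coeff]
  simp only [coeff_X_pow]
  rw [Finset.sum_boole, Cab]
  congr 1
  rw [← Nat.card_eq_finsetCard]
  symm
  refine Nat.card_congr (Equiv.ofBijective (fun s => ⟨(s.1.1.val, s.1.2.val), ?_⟩) ⟨?_, ?_⟩)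
  · have h := Finset.mem_filter.1 s.2
    have h' := Finset.mem_product.1 h.1
    exact ⟨by rw [val_sum, val_sum]; exact h.2.symm, s.1.1.nodup, of_mem_FF _ M _ h'.1,
      s.1.2.nodup, of_mem_FF _ M _ h'.2⟩
  · rintro ⟨⟨s, s'⟩, hs⟩ ⟨⟨t, t'⟩, ht⟩ h
    simp only [Subtype.mk.injEq, Prod.mk.injEq, Finset.val_inj] at h
    exact Subtype.ext (Prod.ext h.1 h.2)
  · rintro ⟨⟨s, t⟩, h1, h2, h3, h4, h5⟩
    dsimp only at h1 h2 h3 h4 h5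
    refine ⟨⟨(⟨s, h2⟩, ⟨t, h4⟩), Finset.mem_filter.2 ⟨Finset.mem_product.2
      ⟨mem_FF_of _ M s (by omega) h3 h2, mem_FF_of _ M t (by omega) h5 h4⟩, ?_⟩⟩, rfl⟩
    rw [← val_sum, ← val_sum]; exact h1.symm

lemma GP_map {S : Type*} [CommRing S] (f : R →+* S) (P : ℕ → Prop) [DecidablePred P] (M : ℕ)
    (q : R) : f (GP P M q) = GP P M (f q) := by
  simp only [GP, map_prod]
  refine Finset.prod_congr rfl fun i _ => ?_
  split_ifs <;> simp

end JT

/-- For every `n ≥ 1`, `|D_5(n)| = |C_{1,2}(n)| + |C_{3,4}(n − 1)|`. -/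
theorem stmt10 (n : ℕ) (hn : 1 ≤ n) : D5 n = Cab 1 2 n + Cab 3 4 (n - 1) := by
  obtain ⟨k, rfl⟩ : ∃ k, n = k + 1 := ⟨n - 1, by omega⟩
  rw [Nat.add_sub_cancel]
  zify
  rw [JT.D5_coeff (k + 1) (k + 2) (by omega), JT.Cab_coeff 1 2 (k + 1) (k + 2) (by omega),
    JT.Cab_coeff 3 4 k (k + 2) (by omega), ← Polynomial.coeff_X_mul _ k, ← Polynomial.coeff_add]
  let I : Ideal (Polynomial ℤ) := Ideal.span {Polynomial.X ^ (k + 2)}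
  have hq : (Ideal.Quotient.mk I Polynomial.X) ^ (k + 2) = 0 := by
    rw [← map_pow, Ideal.Quotient.eq_zero_iff_mem]
    exact Ideal.mem_span_singleton_self _
  have h := JT.main_id (k + 2) _ hq
  simp only [← JT.GP_map, ← map_mul, ← map_add] at h
  rw [Ideal.Quotient.eq, Ideal.mem_span_singleton, Polynomial.X_pow_dvd_iff] at h
  have h2 := h (k + 1) (by omega)
  rw [Polynomial.coeff_sub] at h2
  exact sub_eq_zero.1 h2
end

section
/- Let R and S be integers with R ≥ 2, 1 ≤ S < R and 2S ≠ R, and let k ≥ 1. Then for every integer n ≥ 0, Σ_{j=k}^{∞} ( p_{±S,R}(n − j(3j−1)R/2 − 3jS) − p_{±S,R}(n − j(3j−1)R/2 − 3jS − S − jR) ) ≥ 0. (Equivalently, the series T_+(q,k,S,R) = (1/((q^S, q^{R−S}; q^R)_∞)) Σ_{n=k}^{∞} q^{n(3n−1)R/2+3nS}(1 − q^{S+nR}) has non-negative coefficients.) -/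
/-- `pp R S m` is the number of partitions of `m` all of whose parts are congruent
to `S` or `R−S` mod `R`, with `pp R S m = 0` for `m < 0`. A partition is a multiset
of positive parts. -/
noncomputable def pp (R S : ℕ) (m : ℤ) : ℕ :=
  Nat.card {s : Multiset ℕ // (s.sum : ℤ) = m ∧
    ∀ a ∈ s, 0 < a ∧ (a % R = S % R ∨ a % R = (R - S) % R)}

theorem pp_mono_aux (R S : ℕ) (m : ℤ) (j : ℕ) (hS : 1 ≤ S) :
    pp R S (m - S - (j : ℤ) * R) ≤ pp R S m := by
  unfold pp
  have hfin : Finite {s : Multiset ℕ // (s.sum : ℤ) = m ∧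
      ∀ a ∈ s, 0 < a ∧ (a % R = S % R ∨ a % R = (R - S) % R)} := by
    let f : {s : Multiset ℕ // (s.sum : ℤ) = m ∧
      ∀ a ∈ s, 0 < a ∧ (a % R = S % R ∨ a % R = (R - S) % R)} → Nat.Partition m.toNat :=
      fun s => ⟨s.1, fun {i} hi => (s.2.2 i hi).1, by have := s.2.1; omega⟩
    refine Finite.of_injective f ?_
    intro s t h
    exact Subtype.ext (congrArg Nat.Partition.parts h)
  refine Nat.card_le_card_of_injective
    (fun s => ⟨(S + j * R) ::ₘ s.1, ?_, ?_⟩) ?_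
  · have := s.2.1
    rw [Multiset.sum_cons]
    rw [Nat.cast_add, Nat.cast_add, Nat.cast_mul]
    linarith
  · intro a ha
    rcases Multiset.mem_cons.1 ha with h | h
    · subst h
      exact ⟨by omega, Or.inl (Nat.add_mul_mod_self_right S j R)⟩
    · exact s.2.2 a h
  · intro s t h
    apply Subtype.ext
    have h2 := congrArg Subtype.val h
    exact (Multiset.cons_inj_right _).1 h2

/-- The series `T_+(q,k,S,R)` has non-negative coefficients: for `n ≥ 0`,
`Σ_{j=k}^∞ (p_{±S,R}(n − j(3j−1)R/2 − 3jS) − p_{±S,R}(n − j(3j−1)R/2 − 3jS − S − jR)) ≥ 0`. -/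
theorem stmt11 (R S : ℕ) (hR : 2 ≤ R) (hS : 1 ≤ S) (hSR : S < R) (h2S : 2 * S ≠ R)
    (k : ℕ) (hk : 1 ≤ k) (n : ℤ) (hn : 0 ≤ n) :
    0 ≤ ∑' j : {j : ℕ // k ≤ j},
        ((pp R S (n - ((j.1 : ℤ) * (3 * (j.1 : ℤ) - 1) * R / 2 + 3 * (j.1 : ℤ) * S)) : ℤ) -
         (pp R S (n - ((j.1 : ℤ) * (3 * (j.1 : ℤ) - 1) * R / 2 + 3 * (j.1 : ℤ) * S)
            - S - (j.1 : ℤ) * R) : ℤ)) := by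
  refine tsum_nonneg fun j => ?_
  rw [sub_nonneg]
  exact_mod_cast pp_mono_aux R S _ j.1 hS
end

section
/- Let R and S be integers with R ≥ 2, 1 ≤ S < R and 2S ≠ R, and let k ≥ 1. Then for every integer n ≥ 0, Σ_{j=k}^{∞} ( p_{±S,R}(n − j(3j+1)R/2 + 3jS) − p_{±S,R}(n − j(3j+1)R/2 + 3jS − S + jR) ) ≤ 0. (Equivalently, the series T_−(q,k,S,R) = (1/((q^S, q^{R−S}; q^R)_∞)) Σ_{n=k}^{∞} q^{n(3n+1)R/2−3nS}(1 − q^{S−nR}) has non-positive coefficients.) -/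
theorem pp_finite (R S : ℕ) (m : ℤ) : Finite {s : Multiset ℕ // (s.sum : ℤ) = m ∧
    ∀ a ∈ s, 0 < a ∧ (a % R = S % R ∨ a % R = (R - S) % R)} := by
  refine Finite.of_injective (β := Nat.Partition m.toNat)
    (fun s => ⟨s.1, fun {i} hi => (s.2.2 i hi).1, by have := s.2.1; omega⟩) ?_
  intro s t h
  exact Subtype.ext (congrArg Nat.Partition.parts h)

theorem pp_mono (R S : ℕ) (m m' : ℤ) (c : ℕ) (hc : 0 < c) (hcR : c % R = (R - S) % R)
    (h : m' = m + c) : pp R S m ≤ pp R S m' := by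
  have := pp_finite R S m'
  unfold pp
  refine Nat.card_le_card_of_injective (fun s => ⟨c ::ₘ s.1, ?_, ?_⟩) ?_
  · rw [Multiset.sum_cons]
    have := s.2.1
    rw [Nat.cast_add]
    omega
  · intro a ha
    rcases Multiset.mem_cons.1 ha with rfl | ha
    · exact ⟨hc, Or.inr hcR⟩
    · exact s.2.2 a ha
  · intro s t h
    exact Subtype.ext ((Multiset.cons_inj_right c).1 (congrArg Subtype.val h))

/-- The series `T_−(q,k,S,R)` has non-positive coefficients: for `n ≥ 0`,
`Σ_{j=k}^∞ (p_{±S,R}(n − j(3j+1)R/2 + 3jS) − p_{±S,R}(n − j(3j+1)R/2 + 3jS − S + jR)) ≤ 0`. -/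
theorem stmt12 (R S : ℕ) (hR : 2 ≤ R) (hS : 1 ≤ S) (hSR : S < R) (h2S : 2 * S ≠ R)
    (k : ℕ) (hk : 1 ≤ k) (n : ℤ) (hn : 0 ≤ n) :
    (∑' j : {j : ℕ // k ≤ j},
        ((pp R S (n - ((j.1 : ℤ) * (3 * (j.1 : ℤ) + 1) * R / 2) + 3 * (j.1 : ℤ) * S) : ℤ) -
         (pp R S (n - ((j.1 : ℤ) * (3 * (j.1 : ℤ) + 1) * R / 2) + 3 * (j.1 : ℤ) * S
            - S + (j.1 : ℤ) * R) : ℤ))) ≤ 0 := by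
  refine tsum_nonpos ?_
  rintro ⟨j, hj⟩
  obtain ⟨i, rfl⟩ : ∃ i, j = i + 1 := ⟨j - 1, by omega⟩
  rw [sub_nonpos]
  norm_cast
  refine pp_mono R S _ _ ((R - S) + R * i) (by omega) (Nat.add_mul_mod_self_left _ _ _) ?_
  push_cast [Nat.cast_sub hSR.le]
  ring
end

section
/- For every integer n ≥ 0, b_3(n) − b_3(n−1) − ρ_3(n) ≥ 0. -/
/-- `b3 m` is the number of 3-regular partitions of `m` (no part divisible by 3),
with `b3 m = 0` for `m < 0`. A partition is a multiset of positive parts. -/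
noncomputable def b3 (m : ℤ) : ℕ :=
  Nat.card {s : Multiset ℕ // (s.sum : ℤ) = m ∧ ∀ a ∈ s, 0 < a ∧ ¬ 3 ∣ a}

theorem b3_finite (n : ℤ) :
    Finite {s : Multiset ℕ // (s.sum : ℤ) = n ∧ ∀ a ∈ s, 0 < a ∧ ¬ 3 ∣ a} := by
  refine Finite.of_injective (β := Nat.Partition n.toNat)
    (fun s => ⟨s.1, fun {a} ha => (s.2.2 a ha).1, by have := s.2.1; omega⟩) ?_
  intro s t h
  exact Subtype.ext (congrArg Nat.Partition.parts h)

def b3Step (n : ℤ) (s : {s : Multiset ℕ // (s.sum : ℤ) = n - 1 ∧ ∀ a ∈ s, 0 < a ∧ ¬ 3 ∣ a}) :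
    {s : Multiset ℕ // (s.sum : ℤ) = n ∧ ∀ a ∈ s, 0 < a ∧ ¬ 3 ∣ a} :=
  ⟨1 ::ₘ s.1, by have := s.2.1; simp only [Multiset.sum_cons]; push_cast at *; omega, by
    intro a ha
    rcases Multiset.mem_cons.1 ha with rfl | ha
    · omega
    · exact s.2.2 a ha⟩

theorem b3Step_inj (n : ℤ) : Function.Injective (b3Step n) := by
  intro s t h
  have := congrArg Subtype.val h
  exact Subtype.ext ((Multiset.cons_inj_right 1).1 this)

theorem b3_le (n : ℤ) : b3 (n - 1) ≤ b3 n := by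
  have := b3_finite n
  exact Nat.card_le_card_of_injective _ (b3Step_inj n)

theorem b3_lt (n : ℤ) (w : Multiset ℕ) (hw : (w.sum : ℤ) = n)
    (h : ∀ a ∈ w, 0 < a ∧ ¬ 3 ∣ a) (h1 : 1 ∉ w) : b3 (n - 1) + 1 ≤ b3 n := by
  have := b3_finite n
  have := b3_finite (n - 1)
  unfold b3
  rw [← Finite.card_option]
  refine Nat.card_le_card_of_injective (fun o => Option.elim o ⟨w, hw, h⟩ (b3Step n)) ?_
  have key : ∀ s, b3Step n s ≠ ⟨w, hw, h⟩ := by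
    intro s hs
    have : 1 ::ₘ s.1 = w := congrArg Subtype.val hs
    exact h1 (by rw [← this]; simp)
  rintro (_ | s) (_ | t) hst
  · rfl
  · exact absurd hst.symm (key t)
  · exact absurd hst (key s)
  · exact congrArg some (b3Step_inj n hst)

theorem b3_lt_of (n : ℤ) (hn : 0 ≤ n) (h1 : n ≠ 1) (h3 : n ≠ 3) : b3 (n - 1) + 1 ≤ b3 n := by
  rcases Int.even_or_odd' n with ⟨k, hk | hk⟩
  · refine b3_lt n (Multiset.replicate k.toNat 2) ?_ ?_ ?_
    · simp; omega
    · intro a ha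
      have := Multiset.eq_of_mem_replicate ha
      omega
    · intro ha
      have := Multiset.eq_of_mem_replicate ha
      omega
  · refine b3_lt n (5 ::ₘ Multiset.replicate (k - 2).toNat 2) ?_ ?_ ?_
    · simp; omega
    · intro a ha
      rcases Multiset.mem_cons.1 ha with rfl | ha
      · omega
      · have := Multiset.eq_of_mem_replicate ha
        omega
    · intro ha
      rcases Multiset.mem_cons.1 ha with ha | ha
      · omega
      · have := Multiset.eq_of_mem_replicate ha
        omega

/-- For every `n ≥ 0`, `b_3(n) − b_3(n−1) − ρ_3(n) ≥ 0`. -/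
theorem stmt13
    (ρ : ℤ → ℤ)
    (hρ1 : ∀ i : ℤ, ρ (3 * (i * (3 * i - 1) / 2)) = (-1) ^ i.natAbs)
    (hρ2 : ∀ m : ℤ, (∀ i : ℤ, m ≠ 3 * (i * (3 * i - 1) / 2)) → ρ m = 0)
    (n : ℤ) (hn : 0 ≤ n) :
    0 ≤ (b3 n : ℤ) - (b3 (n - 1) : ℤ) - ρ n := by
  have hle := b3_le n
  by_cases h1 : n = 1
  · have : ρ n = 0 := hρ2 n (fun i => by omega)
    omega
  by_cases h3 : n = 3
  · have : ρ n = -1 := by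
      have := hρ1 1
      norm_num at this
      rw [h3, this]
    omega
  have hlt := b3_lt_of n hn h1 h3
  have : ρ n ≤ 1 := by
    by_cases h : ∀ i : ℤ, n ≠ 3 * (i * (3 * i - 1) / 2)
    · rw [hρ2 n h]; norm_num
    · push Not at h
      obtain ⟨i, hi⟩ := h
      rw [hi, hρ1 i]
      rcases neg_one_pow_eq_or ℤ i.natAbs with h | h <;> rw [h] <;> norm_num
  omega
end

section
/- For every integer n ≥ 0, b_3(n) − b_3(n−1) − b_3(n−2) + b_3(n−5) − ρ_3(n) ≤ 0. -/
def AA (k : ℕ) (m : ℤ) : Set (Multiset ℕ) :=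
  {s | (s.sum : ℤ) = m ∧ ∀ a ∈ s, k ≤ a ∧ ¬ 3 ∣ a}

def EE (m : ℤ) : Set (Multiset ℕ) :=
  {s | (s.sum : ℤ) ≤ m ∧ ∀ a ∈ s, 4 ≤ a ∧ ¬ 3 ∣ a}

lemma b3_eq (m : ℤ) : b3 m = (AA 1 m).ncard := rfl

lemma AA_neg (k : ℕ) (m : ℤ) (hm : m < 0) : AA k m = ∅ := by
  ext s
  simp only [AA, Set.mem_ofPred_eq, Set.mem_empty_iff_false, iff_false]
  rintro ⟨h, -⟩
  omega

lemma EE_neg (m : ℤ) (hm : m < 0) : EE m = ∅ := by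
  ext s
  simp only [EE, Set.mem_ofPred_eq, Set.mem_empty_iff_false, iff_false]
  rintro ⟨h, -⟩
  omega

lemma AA_fin (k : ℕ) (hk : 1 ≤ k) (m : ℤ) : (AA k m).Finite := by
  rcases lt_or_ge m 0 with h | h
  · rw [AA_neg k m h]; exact Set.finite_empty
  · obtain ⟨M, rfl⟩ := Int.eq_ofNat_of_zero_le h
    refine (Set.finite_range (fun p : Nat.Partition M => p.parts)).subset ?_
    rintro s ⟨h1, h2⟩
    refine ⟨⟨s, ?_, ?_⟩, rfl⟩
    · intro i hi
      have := (h2 i hi).1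
      omega
    · exact_mod_cast h1

lemma AA_step (k : ℕ) (hk : 1 ≤ k) (h3 : ¬ 3 ∣ k) (m : ℤ) :
    (AA k m).ncard = (AA k (m - k)).ncard + (AA (k + 1) m).ncard := by
  have hinj : Function.Injective (fun s : Multiset ℕ => k ::ₘ s) := by
    intro s t h
    simpa using h
  have e : AA k m = (fun s : Multiset ℕ => k ::ₘ s) '' (AA k (m - k)) ∪ AA (k + 1) m := by
    ext s
    constructor
    · rintro ⟨h1, h2⟩
      by_cases hks : k ∈ s
      · left
        obtain ⟨t, rfl⟩ := Multiset.exists_cons_of_mem hks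
        refine ⟨t, ⟨?_, fun a ha => h2 a (Multiset.mem_cons_of_mem ha)⟩, rfl⟩
        rw [Multiset.sum_cons] at h1
        rw [Nat.cast_add] at h1
        omega
      · right
        refine ⟨h1, fun a ha => ⟨?_, (h2 a ha).2⟩⟩
        have h4 := (h2 a ha).1
        have : a ≠ k := by rintro rfl; exact hks ha
        omega
    · rintro (⟨t, ⟨h1, h2⟩, rfl⟩ | ⟨h1, h2⟩)
      · refine ⟨?_, ?_⟩
        · simp only [Multiset.sum_cons, Nat.cast_add]
          omega
        · intro a ha
          rcases Multiset.mem_cons.1 ha with rfl | ha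
          · exact ⟨le_rfl, h3⟩
          · exact h2 a ha
      · exact ⟨h1, fun a ha => ⟨by have := (h2 a ha).1; omega, (h2 a ha).2⟩⟩
  rw [e, Set.ncard_union_eq _ ((AA_fin k hk _).image _) (AA_fin _ (by omega) _),
    Set.ncard_image_of_injective _ hinj]
  rw [Set.disjoint_left]
  rintro _ ⟨t, -, rfl⟩ ⟨-, h2⟩
  have := (h2 k (Multiset.mem_cons_self k t)).1
  omega

lemma AA34 (m : ℤ) : AA 3 m = AA 4 m := by
  ext s
  simp only [AA, Set.mem_ofPred_eq]
  refine and_congr_right fun _ => forall₂_congr fun a _ => ?_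
  omega

lemma EE_split (m : ℤ) : EE m = EE (m - 1) ∪ AA 4 m := by
  ext s
  simp only [EE, AA, Set.mem_ofPred_eq, Set.mem_union, ← or_and_right]
  refine and_congr_left fun _ => ?_
  omega

lemma EE_disj (m : ℤ) : Disjoint (EE (m - 1)) (AA 4 m) := by
  rw [Set.disjoint_left]
  rintro s ⟨h, -⟩ ⟨h', -⟩
  omega

lemma EE_fin (m : ℤ) : (EE m).Finite := by
  rcases lt_or_ge m 0 with h | h
  · rw [EE_neg m h]; exact Set.finite_empty
  · induction m, h using Int.leInduction with
    | base =>
      rw [EE_split, EE_neg _ (by norm_num)]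
      exact Set.finite_empty.union (AA_fin 4 (by norm_num) _)
    | succ m _ ih =>
      rw [EE_split, add_sub_cancel_right]
      exact ih.union (AA_fin 4 (by norm_num) _)

lemma EE_card_step (m : ℤ) : (EE m).ncard = (EE (m - 1)).ncard + (AA 4 m).ncard := by
  conv_lhs => rw [EE_split m]
  exact Set.ncard_union_eq (EE_disj m) (EE_fin _) (AA_fin 4 (by norm_num) _)

lemma c_step (m : ℤ) : (AA 2 m).ncard = (AA 2 (m - 2)).ncard + (AA 4 m).ncard := by
  have := AA_step 2 (by norm_num) (by norm_num) m
  rw [← AA34]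
  simpa using this

lemma b_step (m : ℤ) : (AA 1 m).ncard = (AA 1 (m - 1)).ncard + (AA 2 m).ncard := by
  have := AA_step 1 (by norm_num) (by norm_num) m
  simpa using this

lemma EE_card (m : ℤ) : (EE m).ncard = (AA 2 m).ncard + (AA 2 (m - 1)).ncard := by
  have hneg : ∀ m : ℤ, m < 0 → (EE m).ncard = (AA 2 m).ncard + (AA 2 (m - 1)).ncard := by
    intro m h
    rw [EE_neg m h, AA_neg 2 m h, AA_neg 2 (m - 1) (by omega)]
    simp
  have key : ∀ m : ℤ, (EE (m - 1)).ncard = (AA 2 (m - 1)).ncard + (AA 2 (m - 1 - 1)).ncard →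
      (EE m).ncard = (AA 2 m).ncard + (AA 2 (m - 1)).ncard := by
    intro m ih
    rw [EE_card_step, ih, c_step m, show m - 1 - 1 = m - 2 by ring]
    ring
  rcases lt_or_ge m 0 with h | h
  · exact hneg m h
  · induction m, h using Int.leInduction with
    | base => exact key _ (hneg _ (by norm_num))
    | succ m _ ih =>
      apply key
      rw [add_sub_cancel_right]
      exact ih

lemma d_le (n : ℤ) (hn : 0 < n) : (AA 4 n).ncard ≤ (EE (n - 4)).ncard := by
  have hex : ∀ s ∈ AA 4 n, ∃ a, a ∈ s := by
    rintro s ⟨h1, -⟩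
    apply Multiset.exists_mem_of_ne_zero
    rintro rfl
    simp at h1
    omega
  choose! f hf using hex
  have hsum : ∀ s ∈ AA 4 n, (f s : ℤ) + ((s.erase (f s)).sum : ℤ) = n := by
    intro s hs
    have := congrArg Multiset.sum (Multiset.cons_erase (hf s hs))
    rw [Multiset.sum_cons] at this
    rw [← hs.1, ← this]
    rw [Nat.cast_add]
  refine Set.ncard_le_ncard_of_injOn (fun s => s.erase (f s)) ?_ ?_ (EE_fin _)
  · intro s hs
    refine ⟨?_, fun a ha => hs.2 a (Multiset.mem_of_mem_erase ha)⟩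
    have := hsum s hs
    have := (hs.2 _ (hf s hs)).1
    omega
  · intro s hs t ht h
    simp only at h
    have h1 := hsum s hs
    have h2 := hsum t ht
    rw [h] at h1
    have h3 : f s = f t := by omega
    rw [← Multiset.cons_erase (hf s hs), ← Multiset.cons_erase (hf t ht), h, h3]

lemma d_pos (m : ℤ) (hm : 7 ≤ m) : 1 ≤ (AA 4 m).ncard := by
  rw [Nat.one_le_iff_ne_zero, ← Nat.pos_iff_ne_zero, Set.ncard_pos (AA_fin 4 (by norm_num) m)]
  obtain ⟨M, rfl⟩ := Int.eq_ofNat_of_zero_le (show 0 ≤ m by omega)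
  by_cases h : 3 ∣ M
  · refine ⟨{4, M - 4}, ?_, ?_⟩
    · simp
      omega
    · intro a ha
      simp at ha
      omega
  · refine ⟨{M}, ?_, ?_⟩
    · simp
    · intro a ha
      simp at ha
      omega

lemma EE_pos (m : ℤ) (hm : 0 ≤ m) : 1 ≤ (EE m).ncard := by
  rw [Nat.one_le_iff_ne_zero, ← Nat.pos_iff_ne_zero, Set.ncard_pos (EE_fin m)]
  exact ⟨0, by simpa using hm, by simp⟩

lemma d_small (m : ℤ) (hm : m = 1 ∨ m = 2 ∨ m = 3 ∨ m = 6) : (AA 4 m).ncard = 0 := by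
  rw [Set.ncard_eq_zero (AA_fin 4 (by norm_num) m), Set.eq_empty_iff_forall_notMem]
  rintro s ⟨h1, h2⟩
  obtain ⟨a, ha⟩ : ∃ a, a ∈ s := by
    apply Multiset.exists_mem_of_ne_zero
    rintro rfl
    simp at h1
    omega
  obtain ⟨t, rfl⟩ := Multiset.exists_cons_of_mem ha
  have h3 := h2 a ha
  rw [Multiset.sum_cons] at h1
  rw [Nat.cast_add] at h1
  by_cases ht : t = 0
  · subst ht
    simp at h1
    omega
  · obtain ⟨b, hb⟩ := Multiset.exists_mem_of_ne_zero ht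
    have h4 := h2 b (Multiset.mem_cons_of_mem hb)
    have := Multiset.le_sum_of_mem hb
    omega

lemma d_zero : (AA 4 0).ncard ≤ 1 := by
  rw [Set.ncard_le_one (AA_fin 4 (by norm_num) 0)]
  have : ∀ s ∈ AA 4 0, s = 0 := by
    rintro s ⟨h1, h2⟩
    by_contra h
    obtain ⟨b, hb⟩ := Multiset.exists_mem_of_ne_zero h
    have h4 := h2 b hb
    have := Multiset.le_sum_of_mem hb
    omega
  intro a ha b hb
  rw [this a ha, this b hb]

/-- For every `n ≥ 0`, `b_3(n) − b_3(n−1) − b_3(n−2) + b_3(n−5) − ρ_3(n) ≤ 0`. -/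
theorem stmt14
    (ρ : ℤ → ℤ)
    (hρ1 : ∀ i : ℤ, ρ (3 * (i * (3 * i - 1) / 2)) = (-1) ^ i.natAbs)
    (hρ2 : ∀ m : ℤ, (∀ i : ℤ, m ≠ 3 * (i * (3 * i - 1) / 2)) → ρ m = 0)
    (n : ℤ) (hn : 0 ≤ n) :
    (b3 n : ℤ) - (b3 (n - 1) : ℤ) - (b3 (n - 2) : ℤ) + (b3 (n - 5) : ℤ) - ρ n ≤ 0 := by
  have hρ : -1 ≤ ρ n := by
    by_cases h : ∀ i : ℤ, n ≠ 3 * (i * (3 * i - 1) / 2)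
    · rw [hρ2 n h]; norm_num
    · push Not at h
      obtain ⟨i, rfl⟩ := h
      rw [hρ1]
      rcases neg_one_pow_eq_or ℤ i.natAbs with h | h <;> rw [h] <;> norm_num
  have e1 := b_step n
  have e2 := b_step (n - 2)
  have e3 := b_step (n - 3)
  have e4 := b_step (n - 4)
  have e5 := c_step n
  have e6 := EE_card (n - 3)
  have e7 := EE_card_step (n - 3)
  rw [show n - 2 - 1 = n - 3 by ring] at e2
  rw [show n - 3 - 1 = n - 4 by ring] at e3 e6 e7
  rw [show n - 4 - 1 = n - 5 by ring] at e4
  simp only [b3_eq]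
  suffices h : ((AA 4 n).ncard : ℤ) ≤ (EE (n - 3)).ncard + ρ n by omega
  by_cases h0 : n = 0
  · subst h0
    have := hρ1 0
    have := d_zero
    simp at *
    omega
  have hd := d_le n (by omega)
  by_cases h10 : 10 ≤ n
  · have := d_pos (n - 3) (by omega)
    omega
  by_cases h36 : n = 3 ∨ n = 6
  · have := d_small n (by tauto)
    have := EE_pos (n - 3) (by omega)
    omega
  have : ρ n = 0 := by
    apply hρ2
    intro i hi
    have hb : i * (3 * i - 1) / 2 < 4 := by omega
    have hb2 : i * (3 * i - 1) < 8 := by omega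
    have : i ≤ 1 := by nlinarith
    have : -1 ≤ i := by nlinarith
    interval_cases i <;> omega
  omega
end

section
/- For every integer n ≥ 0, b_3(n) − b_3(n−1) − b_3(n−2) + b_3(n−5) + b_3(n−7) − b_3(n−12) − ρ_3(n) ≥ 0. -/
/-- multisets with parts in `T` and sum `n` -/
def U3 (T : Set ℕ) (n : ℕ) : Set (Multiset ℕ) := {s | s.sum = n ∧ ∀ a ∈ s, a ∈ T}

noncomputable def c3 (T : Set ℕ) (n : ℕ) : ℕ := (U3 T n).ncard

theorem U3_finite (T : Set ℕ) (hT : ∀ a ∈ T, 0 < a) (n : ℕ) : (U3 T n).Finite := by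
  apply (Set.finite_range (fun p : Nat.Partition n => p.parts)).subset
  rintro s ⟨h1, h2⟩
  exact ⟨⟨s, fun {a} ha => hT a (h2 a ha), h1⟩, rfl⟩

theorem c3_add (T : Set ℕ) (hT : ∀ a ∈ T, 0 < a) (m : ℕ) (hm : m ∈ T) (n : ℕ) :
    c3 T (n + m) = c3 (T \ {m}) (n + m) + c3 T n := by
  have h : U3 T (n + m) = U3 (T \ {m}) (n + m) ∪ (Multiset.cons m) '' U3 T n := by
    ext s
    constructor
    · rintro ⟨h1, h2⟩
      by_cases hs : m ∈ s
      · right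
        obtain ⟨t, rfl⟩ := Multiset.exists_cons_of_mem hs
        refine ⟨t, ⟨?_, fun a ha => h2 a (Multiset.mem_cons_of_mem ha)⟩, rfl⟩
        rw [Multiset.sum_cons] at h1
        omega
      · left
        refine ⟨h1, fun a ha => ⟨h2 a ha, ?_⟩⟩
        rintro rfl
        exact hs ha
    · rintro (⟨h1, h2⟩ | ⟨t, ⟨h1, h2⟩, rfl⟩)
      · exact ⟨h1, fun a ha => (h2 a ha).1⟩
      · refine ⟨by rw [Multiset.sum_cons]; omega, fun a ha => ?_⟩
        rcases Multiset.mem_cons.1 ha with rfl | ha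
        · exact hm
        · exact h2 a ha
  unfold c3
  rw [h, Set.ncard_union_eq ?_ (U3_finite _ (fun a ha => hT a ha.1) _) ((U3_finite _ hT _).image _),
    Set.ncard_image_of_injective]
  · intro a b hab
    simpa using hab
  · rw [Set.disjoint_left]
    rintro s ⟨h1, h2⟩ ⟨t, ht, rfl⟩
    exact (h2 m (Multiset.mem_cons_self m t)).2 rfl

theorem c3_lt (T : Set ℕ) (m : ℕ) (n : ℕ) (hn : n < m) :
    c3 T n = c3 (T \ {m}) n := by
  unfold c3
  congr 1
  ext s
  constructor
  · rintro ⟨h1, h2⟩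
    refine ⟨h1, fun a ha => ⟨h2 a ha, ?_⟩⟩
    rintro rfl
    have := Multiset.le_sum_of_mem ha
    omega
  · rintro ⟨h1, h2⟩
    exact ⟨h1, fun a ha => (h2 a ha).1⟩

theorem c3_zero (T : Set ℕ) (hT : ∀ a ∈ T, 0 < a) : c3 T 0 = 1 := by
  unfold c3
  rw [Set.ncard_eq_one]
  refine ⟨0, ?_⟩
  ext s
  constructor
  · rintro ⟨h1, h2⟩
    refine Multiset.eq_zero_of_forall_notMem fun a ha => ?_
    have := Multiset.le_sum_of_mem ha
    have := hT a (h2 a ha)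
    omega
  · rintro rfl
    exact ⟨rfl, by simp⟩

theorem c3_bound (T : Set ℕ) (hT : ∀ a ∈ T, 16 ≤ a) (n : ℕ) (hn : 0 < n) :
    c3 T n ≤ ∑ a ∈ Finset.Icc 16 n, c3 T (n - a) := by
  have h : U3 T n ⊆ ⋃ a ∈ Finset.Icc 16 n, (Multiset.cons a) '' U3 T (n - a) := by
    rintro s ⟨h1, h2⟩
    have hs : s ≠ 0 := by
      rintro rfl
      simp at h1
      omega
    obtain ⟨a, ha⟩ := Multiset.exists_mem_of_ne_zero hs
    have := Multiset.le_sum_of_mem ha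
    have := hT a (h2 a ha)
    obtain ⟨t, rfl⟩ := Multiset.exists_cons_of_mem ha
    simp only [Set.mem_iUnion]
    refine ⟨a, Finset.mem_Icc.2 ⟨by omega, by omega⟩, t, ⟨?_, fun b hb => h2 b (Multiset.mem_cons_of_mem hb)⟩, rfl⟩
    rw [Multiset.sum_cons] at h1
    omega
  have hf : ∀ k, (U3 T k).Finite := U3_finite T (fun a ha => by have := hT a ha; omega)
  unfold c3
  refine (Set.ncard_le_ncard h ?_).trans ((Finset.set_ncard_biUnion_le _ _).trans ?_)
  · exact (Finset.Icc 16 n).finite_toSet.biUnion (fun a _ => (hf _).image _)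
  · exact Finset.sum_le_sum fun a _ => Set.ncard_image_le (hf _)

def st3 (m : ℕ) (f : ℕ → ℤ) (k : ℕ) : ℤ := ∑ j ∈ Finset.range (k / m + 1), f (k - m * j)

theorem st3_lt (m : ℕ) (f : ℕ → ℤ) (k : ℕ) (h : k < m) : st3 m f k = f k := by
  simp [st3, Nat.div_eq_of_lt h]

theorem st3_add (m : ℕ) (hm : 0 < m) (f : ℕ → ℤ) (k : ℕ) :
    st3 m f (k + m) = f (k + m) + st3 m f k := by
  unfold st3
  rw [Nat.add_div_right _ hm, Finset.sum_range_succ', add_comm]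
  congr 1
  apply Finset.sum_congr rfl
  intro j _
  congr 1
  rw [mul_add]
  omega

theorem step3 (T : Set ℕ) (hT : ∀ a ∈ T, 0 < a) (m : ℕ) (hm : m ∈ T) (f : ℕ → ℤ) :
    PowerSeries.mk f * PowerSeries.mk (fun n => (c3 T n : ℤ))
      = PowerSeries.mk (st3 m f) * PowerSeries.mk (fun n => (c3 (T \ {m}) n : ℤ)) := by
  have h1 : PowerSeries.mk f = PowerSeries.mk (st3 m f) * (1 - PowerSeries.X ^ m) := by
    ext k
    rw [mul_sub, mul_one, map_sub, PowerSeries.coeff_mul_X_pow']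
    simp only [PowerSeries.coeff_mk]
    split_ifs with h
    · obtain ⟨j, rfl⟩ := Nat.exists_eq_add_of_le' h
      rw [st3_add m (hT m hm)]
      simp
    · rw [st3_lt m f k (by omega)]; simp
  have h2 : PowerSeries.mk (fun n => (c3 (T \ {m}) n : ℤ))
      = (1 - PowerSeries.X ^ m) * PowerSeries.mk (fun n => (c3 T n : ℤ)) := by
    ext k
    rw [sub_mul, one_mul, map_sub, PowerSeries.coeff_X_pow_mul']
    simp only [PowerSeries.coeff_mk]
    split_ifs with h
    · obtain ⟨j, rfl⟩ := Nat.exists_eq_add_of_le' h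
      rw [c3_add T hT m hm]
      simp
    · rw [c3_lt T m k (by omega)]; simp
  rw [h1, h2, mul_assoc]

def P3 (k : ℕ) : ℤ := if k = 0 then 1 else if k = 1 then -1 else if k = 2 then -1 else
  if k = 5 then 1 else if k = 7 then 1 else if k = 12 then -1 else 0

def Q1 (k : ℕ) : ℤ := st3 1 P3 k
def Q2 (k : ℕ) : ℤ := st3 2 Q1 k
def Q4 (k : ℕ) : ℤ := st3 4 Q2 k
def Q5 (k : ℕ) : ℤ := st3 5 Q4 k
def Q7 (k : ℕ) : ℤ := st3 7 Q5 k
def Q8 (k : ℕ) : ℤ := st3 8 Q7 k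
def Q10 (k : ℕ) : ℤ := st3 10 Q8 k
def Q11 (k : ℕ) : ℤ := st3 11 Q10 k
def Q13 (k : ℕ) : ℤ := st3 13 Q11 k
def Q14 (k : ℕ) : ℤ := st3 14 Q13 k

theorem Q1_z (k : ℕ) : Q1 (k + 12) = 0 := by
  induction k with
  | zero => decide +kernel
  | succ k ih =>
    have := st3_add 1 one_pos P3 (k + 12)
    change Q1 (k + 1 + 12) = _ at this
    rw [show st3 1 P3 (k + 12) = Q1 (k + 12) from rfl, ih] at this
    rw [this]
    simp [P3]

theorem Q2_pos (k : ℕ) : 1 ≤ Q2 (k + 9) := by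
  induction k using Nat.strong_induction_on with
  | _ k ih =>
    by_cases h : k < 4
    · revert k
      have : ∀ k < 4, 1 ≤ Q2 (k + 9) := by decide +kernel
      intro k _ h
      exact this k h
    · obtain ⟨j, rfl⟩ := Nat.exists_eq_add_of_le' (not_lt.1 h)
      have := st3_add 2 two_pos Q1 (j + 11)
      change Q2 (j + 4 + 9) = Q1 (j + 1 + 12) + Q2 (j + 2 + 9) at this
      rw [this, Q1_z]
      have := ih (j + 2) (by omega)
      omega

theorem stage3 (m : ℕ) (hm : 0 < m) (hm' : m ≤ 15) (f : ℕ → ℤ) (hf : ∀ k, 30 ≤ k → 3 ≤ f k)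
    (h : ∀ k < 30, 15 ≤ k → 0 ≤ st3 m f k) : ∀ k, 30 ≤ k → 3 ≤ st3 m f k := by
  intro k
  induction k using Nat.strong_induction_on with
  | _ k ih =>
    intro hk
    obtain ⟨j, rfl⟩ := Nat.exists_eq_add_of_le' (show m ≤ k by omega)
    rw [st3_add m hm]
    have := hf _ hk
    by_cases hj : j < 30
    · have := h j hj (by omega)
      omega
    · have := ih j (by omega) (by omega)
      omega

theorem Q4_pos (k : ℕ) (hk : 30 ≤ k) : 3 ≤ Q4 k := by
  induction k using Nat.strong_induction_on with
  | _ k ih =>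
    by_cases h : k < 34
    · have : ∀ k < 34, 30 ≤ k → 3 ≤ Q4 k := by decide +kernel
      exact this k h hk
    · obtain ⟨j, rfl⟩ := Nat.exists_eq_add_of_le' (show 34 ≤ k by omega)
      have := st3_add 4 four_pos Q2 (j + 30)
      change Q4 (j + 34) = Q2 (j + 25 + 9) + Q4 (j + 30) at this
      rw [this]
      have := ih (j + 30) (by omega) (by omega)
      have := Q2_pos (j + 25)
      omega

theorem Q5_mid : ∀ k < 30, 15 ≤ k → 0 ≤ Q5 k := by decide +kernel

theorem Q5_pos (k : ℕ) (hk : 30 ≤ k) : 3 ≤ Q5 k :=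
  stage3 5 (by norm_num) (by norm_num) Q4 Q4_pos Q5_mid k hk

theorem Q7_mid : ∀ k < 30, 15 ≤ k → 0 ≤ Q7 k := by decide +kernel

theorem Q7_pos (k : ℕ) (hk : 30 ≤ k) : 3 ≤ Q7 k :=
  stage3 7 (by norm_num) (by norm_num) Q5 Q5_pos Q7_mid k hk

theorem Q8_mid : ∀ k < 30, 15 ≤ k → 0 ≤ Q8 k := by decide +kernel

theorem Q8_pos (k : ℕ) (hk : 30 ≤ k) : 3 ≤ Q8 k :=
  stage3 8 (by norm_num) (by norm_num) Q7 Q7_pos Q8_mid k hk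

theorem Q10_mid : ∀ k < 30, 15 ≤ k → 0 ≤ Q10 k := by decide +kernel

theorem Q10_pos (k : ℕ) (hk : 30 ≤ k) : 3 ≤ Q10 k :=
  stage3 10 (by norm_num) (by norm_num) Q8 Q8_pos Q10_mid k hk

theorem Q11_mid : ∀ k < 30, 15 ≤ k → 0 ≤ Q11 k := by decide +kernel

theorem Q11_pos (k : ℕ) (hk : 30 ≤ k) : 3 ≤ Q11 k :=
  stage3 11 (by norm_num) (by norm_num) Q10 Q10_pos Q11_mid k hk

theorem Q13_mid : ∀ k < 30, 15 ≤ k → 0 ≤ Q13 k := by decide +kernel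

theorem Q13_pos (k : ℕ) (hk : 30 ≤ k) : 3 ≤ Q13 k :=
  stage3 13 (by norm_num) (by norm_num) Q11 Q11_pos Q13_mid k hk

theorem Q14_mid : ∀ k < 30, 15 ≤ k → 0 ≤ Q14 k := by decide +kernel

theorem Q14_pos (k : ℕ) (hk : 30 ≤ k) : 3 ≤ Q14 k :=
  stage3 14 (by norm_num) (by norm_num) Q13 Q13_pos Q14_mid k hk

def g3 (k : ℕ) : ℤ := (if k = 3 then -1 else 0) + (if k = 6 then -1 else 0) + (if 19 ≤ k then 3 else 0)

theorem Q14_g (k : ℕ) : g3 k ≤ Q14 k := by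
  by_cases h : k < 30
  · have : ∀ k < 30, g3 k ≤ Q14 k := by decide +kernel
    exact this k h
  · have := Q14_pos k (by omega)
    unfold g3
    rw [if_neg (by omega), if_neg (by omega), if_pos (by omega)]
    omega

theorem Q14_small : ∀ k < 19, Q14 k = [1, 0, 0, -1, 0, 0, -1, 0, 0, 0, 0, 0, 0, 0, 0, 2, 0, 1, 2].getD k 0 := by
  decide +kernel

def T3 : Set ℕ := {a | 0 < a ∧ ¬ 3 ∣ a}

def R3 : Set ℕ := (((((((((T3 \ {1}) \ {2}) \ {4}) \ {5}) \ {7}) \ {8}) \ {10}) \ {11}) \ {13}) \ {14}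

theorem R3_ge (a : ℕ) (ha : a ∈ R3) : 16 ≤ a := by
  simp only [R3, T3, Set.mem_sdiff, Set.mem_ofPred_eq, Set.mem_singleton_iff] at ha
  omega

theorem prod3 : PowerSeries.mk P3 * PowerSeries.mk (fun n => (c3 T3 n : ℤ))
    = PowerSeries.mk Q14 * PowerSeries.mk (fun n => (c3 R3 n : ℤ)) := by
  have e (T : Set ℕ) (m : ℕ) (h : ∀ a ∈ T, 0 < a) : ∀ a ∈ T \ {m}, 0 < a := fun a ha => h a ha.1
  have h0 : ∀ a ∈ T3, 0 < a := fun a ha => ha.1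
  rw [step3 _ h0 1 (by simp [T3]), step3 _ (by simp +contextual [T3]) 2 (by simp [T3]),
    step3 _ (by simp +contextual [T3]) 4 (by simp [T3]), step3 _ (by simp +contextual [T3]) 5 (by simp [T3]),
    step3 _ (by simp +contextual [T3]) 7 (by simp [T3]), step3 _ (by simp +contextual [T3]) 8 (by simp [T3]),
    step3 _ (by simp +contextual [T3]) 10 (by simp [T3]), step3 _ (by simp +contextual [T3]) 11 (by simp [T3]),
    step3 _ (by simp +contextual [T3]) 13 (by simp [T3]), step3 _ (by simp +contextual [T3]) 14 (by simp [T3])]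
  rfl

theorem b3_nat (n : ℕ) : b3 (n : ℤ) = c3 T3 n := by
  unfold b3 c3 U3 T3
  rw [← Nat.card_coe_set_eq]
  simp only [Nat.cast_inj, Set.mem_setOf_eq]
  rfl

theorem b3_sub (n j : ℕ) : (b3 ((n : ℤ) - (j : ℤ)) : ℤ) = if j ≤ n then (c3 T3 (n - j) : ℤ) else 0 := by
  split_ifs with h
  · rw [← Nat.cast_sub h, b3_nat]
  · unfold b3
    have : IsEmpty {s : Multiset ℕ // (s.sum : ℤ) = (n : ℤ) - (j : ℤ) ∧ ∀ a ∈ s, 0 < a ∧ ¬ 3 ∣ a} := by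
      refine ⟨?_⟩
      rintro ⟨s, h1, -⟩
      omega
    rw [Nat.card_of_isEmpty]
    rfl

theorem comb3 (n : ℕ) : (b3 n : ℤ) - (b3 ((n : ℤ) - 1) : ℤ) - (b3 ((n : ℤ) - 2) : ℤ) + (b3 ((n : ℤ) - 5) : ℤ)
        + (b3 ((n : ℤ) - 7) : ℤ) - (b3 ((n : ℤ) - 12) : ℤ)
     = ∑ k ∈ Finset.range (n + 1), Q14 k * (c3 R3 (n - k) : ℤ) := by
  have h1 := b3_sub n 1
  have h2 := b3_sub n 2
  have h5 := b3_sub n 5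
  have h7 := b3_sub n 7
  have h12 := b3_sub n 12
  push_cast at h1 h2 h5 h7 h12
  rw [h1, h2, h5, h7, h12, b3_nat]
  have hp : PowerSeries.mk P3 = (1 - PowerSeries.X ^ 1 - PowerSeries.X ^ 2 + PowerSeries.X ^ 5
      + PowerSeries.X ^ 7 - PowerSeries.X ^ 12 : PowerSeries ℤ) := by
    ext k
    simp only [PowerSeries.coeff_mk, map_add, map_sub, PowerSeries.coeff_X_pow, PowerSeries.coeff_one, P3]
    split_ifs <;> first | omega | simp
  have h := congrArg (PowerSeries.coeff n) prod3
  rw [hp, PowerSeries.coeff_mul (n := n) (φ := PowerSeries.mk Q14),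
    Finset.Nat.sum_antidiagonal_eq_sum_range_succ_mk] at h
  simp only [sub_mul, add_mul, one_mul, map_add, map_sub, PowerSeries.coeff_X_pow_mul',
    PowerSeries.coeff_mk] at h
  exact h

theorem big3 (n : ℕ) (hn : 19 ≤ n) : 1 ≤ ∑ k ∈ Finset.range (n + 1), Q14 k * (c3 R3 (n - k) : ℤ) := by
  have a1 : ∑ k ∈ Finset.range (n + 1), g3 k * (c3 R3 (n - k) : ℤ)
      ≤ ∑ k ∈ Finset.range (n + 1), Q14 k * (c3 R3 (n - k) : ℤ) :=
    Finset.sum_le_sum fun k _ => mul_le_mul_of_nonneg_right (Q14_g k) (by positivity)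
  have hI : ∑ k ∈ Finset.range (n + 1), (if 19 ≤ k then (c3 R3 (n - k) : ℤ) else 0)
      = ∑ k ∈ Finset.Icc 19 n, (c3 R3 (n - k) : ℤ) := by
    rw [← Finset.sum_filter]
    congr 1
    ext k
    simp only [Finset.mem_filter, Finset.mem_range, Finset.mem_Icc]
    omega
  have a2 : ∑ k ∈ Finset.range (n + 1), g3 k * (c3 R3 (n - k) : ℤ)
      = -(c3 R3 (n - 3) : ℤ) - (c3 R3 (n - 6) : ℤ) + 3 * ∑ k ∈ Finset.Icc 19 n, (c3 R3 (n - k) : ℤ) := by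
    rw [← hI]
    simp only [g3, add_mul, ite_mul, zero_mul, Finset.sum_add_distrib, Finset.sum_ite_eq',
      Finset.mem_range, Finset.mul_sum, mul_ite, mul_zero]
    rw [if_pos (by omega), if_pos (by omega)]
    ring
  have key : ∀ j, j = 3 ∨ j = 6 → c3 R3 (n - j) ≤ ∑ k ∈ Finset.Icc 19 n, c3 R3 (n - k) := by
    intro j hj
    refine (c3_bound R3 R3_ge (n - j) (by omega)).trans ?_
    calc ∑ a ∈ Finset.Icc 16 (n - j), c3 R3 (n - j - a)
        = ∑ k ∈ (Finset.Icc 16 (n - j)).image (· + j), c3 R3 (n - k) := by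
          rw [Finset.sum_image (fun a _ b _ h => by simpa using h)]
          refine Finset.sum_congr rfl fun a _ => ?_
          congr 1
          omega
      _ ≤ _ := by
          refine Finset.sum_le_sum_of_subset fun k hk => ?_
          simp only [Finset.mem_image, Finset.mem_Icc] at hk ⊢
          omega
  have k3 := key 3 (Or.inl rfl)
  have k6 := key 6 (Or.inr rfl)
  have k0 : c3 R3 (n - n) ≤ ∑ k ∈ Finset.Icc 19 n, c3 R3 (n - k) :=
    Finset.single_le_sum (f := fun k => c3 R3 (n - k)) (fun _ _ => Nat.zero_le _)
      (Finset.mem_Icc.2 ⟨hn, le_rfl⟩)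
  rw [Nat.sub_self, c3_zero R3 (fun a ha => by have := R3_ge a ha; omega)] at k0
  zify at k3 k6 k0
  linarith

theorem small3 (n : ℕ) (hn : n < 19) : Q14 n ≤ ∑ k ∈ Finset.range (n + 1), Q14 k * (c3 R3 (n - k) : ℤ) := by
  rw [Finset.sum_range_succ, Nat.sub_self, c3_zero R3 (fun a ha => by have := R3_ge a ha; omega)]
  have : 0 ≤ ∑ k ∈ Finset.range n, Q14 k * (c3 R3 (n - k) : ℤ) := by
    refine Finset.sum_nonneg fun k hk => ?_
    rw [Finset.mem_range] at hk
    by_cases h : n - k < 16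
    · have := c3_bound R3 R3_ge (n - k) (by omega)
      rw [Finset.Icc_eq_empty (by omega), Finset.sum_empty] at this
      rw [Nat.le_zero.1 this]
      simp
    · have : ∀ k < 3, 0 ≤ Q14 k := by decide +kernel
      have := this k (by omega)
      positivity
  simpa using this

/-- For every `n ≥ 0`,
`b_3(n) − b_3(n−1) − b_3(n−2) + b_3(n−5) + b_3(n−7) − b_3(n−12) − ρ_3(n) ≥ 0`. -/
theorem stmt15
    (ρ : ℤ → ℤ)
    (hρ1 : ∀ i : ℤ, ρ (3 * (i * (3 * i - 1) / 2)) = (-1) ^ i.natAbs)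
    (hρ2 : ∀ m : ℤ, (∀ i : ℤ, m ≠ 3 * (i * (3 * i - 1) / 2)) → ρ m = 0)
    (n : ℤ) (hn : 0 ≤ n) :
    0 ≤ (b3 n : ℤ) - (b3 (n - 1) : ℤ) - (b3 (n - 2) : ℤ) + (b3 (n - 5) : ℤ)
        + (b3 (n - 7) : ℤ) - (b3 (n - 12) : ℤ) - ρ n := by
  have hle : ∀ m, ρ m ≤ 1 := by
    intro m
    by_cases h : ∃ i : ℤ, m = 3 * (i * (3 * i - 1) / 2)
    · obtain ⟨i, rfl⟩ := h
      rw [hρ1]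
      rcases neg_one_pow_eq_or ℤ i.natAbs with h | h <;> rw [h] <;> norm_num
    · push Not at h
      rw [hρ2 m h]
      norm_num
  obtain ⟨n, rfl⟩ := Int.eq_ofNat_of_zero_le hn
  rw [comb3]
  by_cases hb : 19 ≤ n
  · have := big3 n hb
    have := hle n
    linarith
  · have hs := small3 n (by omega)
    have hq := Q14_small n (by omega)
    suffices ρ n ≤ Q14 n by linarith
    rw [hq]
    have h3 := hρ1 1
    have h6 := hρ1 (-1)
    norm_num at h3 h6
    have hz : n ≠ 0 → n ≠ 3 → n ≠ 6 → n ≠ 15 → ρ n = 0 := by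
      intro n0 n3 n6 n15
      apply hρ2
      intro i hi
      have i1 : i < 4 := by
        by_contra hc
        have : 22 ≤ i * (3 * i - 1) / 2 := by
          rw [Int.le_ediv_iff_mul_le (by norm_num)]
          nlinarith
        omega
      have i2 : -4 < i := by
        by_contra hc
        have : 22 ≤ i * (3 * i - 1) / 2 := by
          rw [Int.le_ediv_iff_mul_le (by norm_num)]
          nlinarith
        omega
      interval_cases i <;> norm_num at hi <;> omega
    by_cases n0 : n = 0
    · subst n0; exact hle _
    by_cases n3 : n = 3
    · subst n3; simp [h3]
    by_cases n6 : n = 6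
    · subst n6; simp [h6]
    by_cases n15 : n = 15
    · subst n15; exact (hle _).trans (by decide)
    rw [hz n0 n3 n6 n15]
    have hn' : n < 19 := by omega
    clear hq hs hz hn
    interval_cases n <;> first | omega | decide
end

section
/- For every integer n ≥ 0, Q(n) − Q(n−1) − ρ_4(n) ≥ 0. -/
/-- `Q m` is the number of partitions of `m` into distinct parts, with `Q m = 0`
for `m < 0`. A partition is a multiset of positive parts. -/
noncomputable def Q (m : ℤ) : ℕ :=
  Nat.card {s : Multiset ℕ // (s.sum : ℤ) = m ∧ s.Nodup ∧ ∀ a ∈ s, 0 < a}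

def QSet (m : ℤ) : Set (Multiset ℕ) :=
  {s | (s.sum : ℤ) = m ∧ s.Nodup ∧ ∀ a ∈ s, 0 < a}

theorem Q_eq (m : ℤ) : Q m = (QSet m).ncard := rfl

theorem QSet_finite (m : ℤ) : (QSet m).Finite := by
  refine (Set.finite_Iic (Multiset.range (m.toNat + 1))).subset ?_
  rintro s ⟨h1, h2, h3⟩
  rw [Set.mem_Iic, Multiset.le_iff_subset h2]
  intro a ha
  have := Multiset.le_sum_of_mem ha
  rw [Multiset.mem_range]
  omega

def bump (s : Multiset ℕ) : Multiset ℕ := (s.sup + 1) ::ₘ s.erase s.sup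

theorem sup_mem_of_ne (s : Multiset ℕ) (h : s ≠ 0) : s.sup ∈ s := by
  induction s using Multiset.induction_on with
  | empty => exact absurd rfl h
  | cons a s ih =>
    rw [Multiset.sup_cons]
    by_cases hs : s = 0
    · subst hs; simp
    · rcases le_total a s.sup with h | h
      · rw [sup_eq_right.2 h]; exact Multiset.mem_cons_of_mem (ih hs)
      · rw [sup_eq_left.2 h]; exact Multiset.mem_cons_self _ _

theorem bump_sup (s : Multiset ℕ) : (bump s).sup = s.sup + 1 := by
  unfold bump
  rw [Multiset.sup_cons, sup_eq_left]
  exact (Multiset.sup_mono (Multiset.erase_subset _ _)).trans (Nat.le_succ _)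

theorem bump_mem (n : ℤ) (s : Multiset ℕ) (hs : s ∈ QSet (n - 1)) : bump s ∈ QSet n := by
  obtain ⟨h1, h2, h3⟩ := hs
  refine ⟨?_, ?_, ?_⟩
  · by_cases h : s = 0
    · subst h; simp [bump] at h1 ⊢; omega
    · have := congrArg Multiset.sum (Multiset.cons_erase (sup_mem_of_ne s h))
      rw [Multiset.sum_cons] at this
      unfold bump
      rw [Multiset.sum_cons]
      omega
  · unfold bump
    rw [Multiset.nodup_cons]
    refine ⟨fun h => ?_, h2.erase _⟩
    have := Multiset.le_sup (Multiset.mem_of_mem_erase h)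
    omega
  · intro a ha
    unfold bump at ha
    rcases Multiset.mem_cons.1 ha with h | h
    · omega
    · exact h3 a (Multiset.mem_of_mem_erase h)

theorem bump_inj (n : ℤ) : Set.InjOn bump (QSet n) := by
  intro s hs t ht h
  have hsup : s.sup = t.sup := by
    have := congrArg Multiset.sup h
    rw [bump_sup, bump_sup] at this
    omega
  have he : s.erase s.sup = t.erase t.sup := by
    unfold bump at h
    rw [hsup] at h ⊢
    exact (Multiset.cons_inj_right _).1 h
  have key : ∀ u ∈ QSet n, u = 0 ↔ u.sup = 0 := by
    intro u hu
    refine ⟨fun h => by subst h; rfl, fun h => ?_⟩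
    by_contra h0
    have := hu.2.2 _ (sup_mem_of_ne u h0)
    omega
  by_cases h0 : s = 0
  · rw [h0, eq_comm, key t ht, ← hsup, ← key s hs, h0]
  · have h0' : t ≠ 0 := by
      rw [Ne, key t ht, ← hsup, ← key s hs]; exact h0
    rw [← Multiset.cons_erase (sup_mem_of_ne s h0), ← Multiset.cons_erase (sup_mem_of_ne t h0'),
      he, hsup]

theorem Q_mono (n : ℤ) : Q (n - 1) ≤ Q n := by
  rw [Q_eq, Q_eq]
  exact Set.ncard_le_ncard_of_injOn bump (bump_mem n) (bump_inj _) (QSet_finite n)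

theorem Q_strict (k : ℕ) (hk : 2 ≤ k) : Q ((2 * k + 2 : ℤ) - 1) < Q (2 * k + 2) := by
  rw [Q_eq, Q_eq, ← Set.ncard_image_of_injOn (bump_inj _)]
  refine Set.ncard_lt_ncard ?_ (QSet_finite _)
  rw [Set.ssubset_iff_of_subset (by rintro _ ⟨s, hs, rfl⟩; exact bump_mem _ s hs)]
  refine ⟨(k + 1) ::ₘ k ::ₘ {1}, ⟨?_, ?_, ?_⟩, ?_⟩
  · simp; ring
  · simp; omega
  · simp; omega
  · rintro ⟨s, hs, h⟩
    have h1 : s.sup = k := by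
      have := congrArg Multiset.sup h
      rw [bump_sup] at this
      simp at this
      omega
    unfold bump at h
    rw [h1, Multiset.cons_inj_right] at h
    have h2 : k ∈ s.erase k := by rw [h]; simp
    exact hs.2.1.notMem_erase h2

/-- For every `n ≥ 0`, `Q(n) − Q(n−1) − ρ_4(n) ≥ 0`. -/
theorem stmt16
    (ρ : ℤ → ℤ)
    (hρ1 : ∀ i : ℤ, ρ (4 * (i * (3 * i - 1) / 2)) = (-1) ^ i.natAbs)
    (hρ2 : ∀ m : ℤ, (∀ i : ℤ, m ≠ 4 * (i * (3 * i - 1) / 2)) → ρ m = 0)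
    (n : ℤ) (hn : 0 ≤ n) :
    0 ≤ (Q n : ℤ) - (Q (n - 1) : ℤ) - ρ n := by
  have hm := Q_mono n
  by_cases h : ∀ i : ℤ, n ≠ 4 * (i * (3 * i - 1) / 2)
  · rw [hρ2 n h]; omega
  · push Not at h
    obtain ⟨i, hi⟩ := h
    have hle : ρ n ≤ 1 := by
      rw [hi, hρ1]
      rcases neg_one_pow_eq_or ℤ i.natAbs with h | h <;> rw [h] <;> norm_num
    have hd : n = 0 ∨ n = 4 ∨ 6 ≤ n := by omega
    rcases hd with h0 | h4 | h6
    · have e1 : Q n ≠ 0 := by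
        rw [Q_eq]
        refine (Set.ncard_pos (QSet_finite n)).2 ⟨0, ?_⟩ |>.ne'
        refine ⟨?_, ?_, ?_⟩ <;> simp [h0]
      have e2 : Q (n - 1) = 0 := by
        rw [Q_eq, Set.ncard_eq_zero (QSet_finite _), Set.eq_empty_iff_forall_notMem]
        rintro s ⟨hs, -⟩
        omega
      omega
    · have := hρ1 1
      norm_num at this
      rw [h4] at hm ⊢
      rw [this]
      omega
    · obtain ⟨k, hk⟩ : ∃ k : ℕ, n = 2 * k + 2 := ⟨(n / 2 - 1).toNat, by omega⟩
      have := Q_strict k (by omega)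
      rw [← hk] at this
      omega
end

section
/- For every integer n ≥ 0, Q(n) − Q(n−1) − Q(n−3) + Q(n−6) − ρ_4(n) ≤ 0. -/
/-- multisets of odd parts, all at least `k`, with sum `n` -/
def oddSet (k : ℕ) (n : ℤ) : Set (Multiset ℕ) :=
  {s | (s.sum : ℤ) = n ∧ ∀ a ∈ s, Odd a ∧ k ≤ a}

noncomputable def cnt (k : ℕ) (n : ℤ) : ℕ := (oddSet k n).ncard

lemma oddSet_finite (k : ℕ) (n : ℤ) : (oddSet k n).Finite := by
  apply Set.Finite.subset (Set.finite_range (fun p : Nat.Partition n.toNat => p.parts))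
  rintro s ⟨h1, h2⟩
  refine ⟨⟨s, fun {i} hi => (h2 i hi).1.pos, by omega⟩, rfl⟩

lemma cnt_rec (k : ℕ) (hk : Odd k) (n : ℤ) :
    cnt k n = cnt (k + 2) n + cnt k (n - k) := by
  have h : oddSet k n = oddSet (k + 2) n ∪ (fun s => k ::ₘ s) '' oddSet k (n - k) := by
    ext s
    constructor
    · rintro ⟨h1, h2⟩
      by_cases hks : k ∈ s
      · right
        obtain ⟨t, rfl⟩ := Multiset.exists_cons_of_mem hks
        refine ⟨t, ⟨?_, fun a ha => h2 a (Multiset.mem_cons_of_mem ha)⟩, rfl⟩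
        rw [Multiset.sum_cons] at h1
        omega
      · left
        refine ⟨h1, fun a ha => ⟨(h2 a ha).1, ?_⟩⟩
        have h3 := h2 a ha
        have h4 : a ≠ k := fun h => hks (h ▸ ha)
        obtain ⟨x, hx⟩ := hk
        obtain ⟨y, hy⟩ := h3.1
        omega
    · rintro (⟨h1, h2⟩ | ⟨t, ⟨h1, h2⟩, rfl⟩)
      · exact ⟨h1, fun a ha => ⟨(h2 a ha).1, by have := (h2 a ha).2; omega⟩⟩
      · refine ⟨by rw [Multiset.sum_cons]; omega, fun a ha => ?_⟩
        rcases Multiset.mem_cons.1 ha with rfl | ha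
        · exact ⟨hk, le_rfl⟩
        · exact h2 a ha
  unfold cnt
  rw [h, Set.ncard_union_eq _ (oddSet_finite _ _) ((oddSet_finite _ _).image _),
    Set.ncard_image_of_injective]
  · intro s t hst
    exact (Multiset.cons_inj_right k).1 hst
  · rw [Set.disjoint_left]
    rintro s ⟨_, h2⟩ ⟨t, _, rfl⟩
    have := (h2 k (Multiset.mem_cons_self _ _)).2
    omega

lemma cnt_eq_zero (k : ℕ) (n : ℤ) (hn : n ≠ 0) (h : n < k) : cnt k n = 0 := by
  unfold cnt
  rw [Set.ncard_eq_zero (oddSet_finite _ _), Set.eq_empty_iff_forall_notMem]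
  rintro s ⟨h1, h2⟩
  rcases s.empty_or_exists_mem with rfl | ⟨a, ha⟩
  · simp at h1; omega
  · have := Multiset.le_sum_of_mem ha
    have := (h2 a ha).2
    omega

lemma cnt_pos (k : ℕ) (n : ℤ) (s : Multiset ℕ) (hs : s ∈ oddSet k n) : 1 ≤ cnt k n :=
  (Set.ncard_pos (oddSet_finite _ _)).2 ⟨s, hs⟩

lemma cnt_zero (k : ℕ) : cnt k 0 = 1 := by
  unfold cnt
  rw [Set.ncard_eq_one]
  refine ⟨0, ?_⟩
  ext s
  constructor
  · rintro ⟨h1, h2⟩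
    rcases s.empty_or_exists_mem with rfl | ⟨a, ha⟩
    · simp
    · have := Multiset.le_sum_of_mem ha
      have := (h2 a ha).1.pos
      omega
  · rintro rfl
    exact ⟨by simp, by simp⟩

lemma cnt_mono (k : ℕ) (n : ℤ) : cnt (k + 4) n ≤ cnt k n := by
  apply Set.ncard_le_ncard _ (oddSet_finite _ _)
  rintro s ⟨h1, h2⟩
  exact ⟨h1, fun a ha => ⟨(h2 a ha).1, by have := (h2 a ha).2; omega⟩⟩

lemma cnt_shift (m : ℕ) : ∀ (k : ℕ) (_ : Odd k) (n : ℤ) (_ : n ≠ 0) (_ : n < k + 4 + m),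
    cnt (k + 4) n ≤ cnt k (n - 4) := by
  induction m with
  | zero =>
    intro k _ n hn h
    rw [cnt_eq_zero (k + 4) n hn (by push_cast at *; omega)]
    exact Nat.zero_le _
  | succ m ih =>
    intro k hk n hn h
    have h1 := cnt_rec (k + 4) (by simpa [Nat.odd_add, parity_simps] using hk) n
    have h2 := cnt_rec k hk (n - 4)
    have h3 := ih (k + 2) (by simpa [Nat.odd_add, parity_simps] using hk) n hn
      (by push_cast at *; omega)
    have h4 := cnt_mono k (n - 4 - k)
    have e : n - ((k + 4 : ℕ) : ℤ) = n - 4 - k := by push_cast; ring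
    rw [e] at h1
    have e2 : k + 4 + 2 = k + 2 + 4 := by ring
    rw [e2] at h1
    omega

lemma Q_eq_s17 (n : ℤ) : Q n = cnt 1 n := by
  rcases lt_or_ge n 0 with h | h
  · rw [cnt_eq_zero 1 n (by omega) (by push_cast; omega)]
    unfold Q
    rw [Nat.card_eq_zero]
    left
    constructor
    rintro ⟨s, h1, _⟩
    omega
  · lift n to ℕ using h
    have hinj : Function.Injective (fun p : Nat.Partition n => p.parts) :=
      fun p q h => Nat.Partition.ext h
    have h1 : Q n = (Nat.Partition.distincts n).card := by
      rw [← Set.ncard_coe_finset, ← Set.ncard_image_of_injective _ hinj]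
      unfold Q
      change Nat.card ({s : Multiset ℕ | (s.sum : ℤ) = n ∧ s.Nodup ∧ ∀ a ∈ s, 0 < a} :) = _
      rw [Nat.card_coe_set_eq]
      congr 1
      ext s
      constructor
      · rintro ⟨h1, h2, h3⟩
        refine ⟨⟨s, fun {i} hi => h3 i hi, by omega⟩, ?_, rfl⟩
        simpa [Nat.Partition.distincts] using h2
      · rintro ⟨p, hp, rfl⟩
        refine ⟨by simp [p.parts_sum], ?_, fun a ha => p.parts_pos ha⟩
        simpa [Nat.Partition.distincts] using hp
    have h2 : cnt 1 n = (Nat.Partition.odds n).card := by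
      rw [← Set.ncard_coe_finset, ← Set.ncard_image_of_injective _ hinj]
      unfold cnt
      congr 1
      ext s
      constructor
      · rintro ⟨h1, h2⟩
        refine ⟨⟨s, fun {i} hi => (h2 i hi).1.pos, by omega⟩, ?_, rfl⟩
        simp only [Nat.Partition.odds, Nat.Partition.restricted, Finset.coe_filter,
          Finset.mem_univ, true_and, Set.mem_ofPred_eq]
        intro i hi
        exact Nat.not_even_iff_odd.2 (h2 i hi).1
      · rintro ⟨p, hp, rfl⟩
        refine ⟨by simp [p.parts_sum], fun a ha => ⟨?_, p.parts_pos ha⟩⟩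
        simp only [Nat.Partition.odds, Nat.Partition.restricted, Finset.coe_filter,
          Finset.mem_univ, true_and, Set.mem_ofPred_eq] at hp
        exact Nat.not_even_iff_odd.1 (hp a ha)
    rw [h1, h2, Nat.Partition.card_odds_eq_card_distincts]

/-- For every `n ≥ 0`, `Q(n) − Q(n−1) − Q(n−3) + Q(n−6) − ρ_4(n) ≤ 0`. -/
theorem stmt17
    (ρ : ℤ → ℤ)
    (hρ1 : ∀ i : ℤ, ρ (4 * (i * (3 * i - 1) / 2)) = (-1) ^ i.natAbs)
    (hρ2 : ∀ m : ℤ, (∀ i : ℤ, m ≠ 4 * (i * (3 * i - 1) / 2)) → ρ m = 0)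
    (n : ℤ) (hn : 0 ≤ n) :
    (Q n : ℤ) - (Q (n - 1) : ℤ) - (Q (n - 3) : ℤ) + (Q (n - 6) : ℤ) - ρ n ≤ 0 := by
  simp only [Q_eq_s17]
  rcases hn.eq_or_lt with rfl | hn
  · have h0 := hρ1 0
    norm_num at h0
    rw [h0, cnt_zero, cnt_eq_zero 1 (0 - 1), cnt_eq_zero 1 (0 - 3), cnt_eq_zero 1 (0 - 6)] <;>
      norm_num
  have r (k : ℕ) (hk : Odd k) (a b : ℤ) (hab : b = a - k) :
      cnt k a = cnt (k + 2) a + cnt k b := by rw [hab]; exact cnt_rec k hk a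
  have a1 := r 1 (by decide) n (n - 1) (by simp)
  have a2 := r 1 (by decide) (n - 3) (n - 4) (by push_cast; ring)
  have a3 := r 1 (by decide) (n - 4) (n - 5) (by push_cast; ring)
  have a4 := r 1 (by decide) (n - 5) (n - 6) (by push_cast; ring)
  have a5 := r 3 (by decide) n (n - 3) (by push_cast; ring)
  have a6 := r 5 (by decide) n (n - 5) (by push_cast; ring)
  have a7 := r 3 (by decide) (n - 5) (n - 8) (by push_cast; ring)
  have a8 := cnt_shift n.toNat 3 (by decide) n (by omega) (by push_cast; omega)
  norm_num at a1 a2 a3 a4 a5 a6 a7 a8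
  by_cases hp : ∃ i : ℤ, n = 4 * (i * (3 * i - 1) / 2)
  · have hge : -1 ≤ ρ n := by
      obtain ⟨i, hi⟩ := hp
      rw [hi, hρ1]
      rcases neg_one_pow_eq_or ℤ i.natAbs with h | h <;> rw [h] <;> norm_num
    have hmod : n % 4 = 0 := by
      obtain ⟨i, hi⟩ := hp
      omega
    suffices 1 ≤ cnt 3 (n - 8) ∨ cnt 7 n + 1 ≤ cnt 3 (n - 4) by omega
    by_cases h4 : n = 4
    · right
      subst h4
      rw [cnt_eq_zero 7 4 (by norm_num) (by norm_num)]
      norm_num [cnt_zero]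
    by_cases h8 : n = 8
    · left
      subst h8
      norm_num [cnt_zero]
    by_cases h12 : n = 12
    · right
      subst h12
      have b1 := cnt_rec 7 (by decide) 12
      have b2 := cnt_rec 9 (by decide) 12
      have b3 := cnt_rec 11 (by decide) 12
      have b4 := cnt_eq_zero 13 12 (by norm_num) (by norm_num)
      have b5 := cnt_eq_zero 11 1 (by norm_num) (by norm_num)
      have b6 := cnt_eq_zero 9 3 (by norm_num) (by norm_num)
      have b7 := cnt_eq_zero 7 5 (by norm_num) (by norm_num)
      have b8 := cnt_pos 3 8 {3, 5} ⟨by simp, by simp; decide⟩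
      norm_num at b1 b2 b3 ⊢
      omega
    left
    refine cnt_pos 3 (n - 8) {3, (n - 11).toNat} ⟨?_, ?_⟩
    · simp; omega
    · intro a ha
      simp at ha
      rcases ha with rfl | rfl
      · exact ⟨by decide, le_rfl⟩
      · exact ⟨by rw [Nat.odd_iff]; omega, by omega⟩
  · push Not at hp
    rw [hρ2 n hp]
    omega
end

section
/- For every integer n ≥ 0, Q(n) − Q(n−1) − Q(n−3) + Q(n−6) + Q(n−10) − Q(n−15) − ρ_4(n) ≥ 0. -/
theorem Q_neg (m : ℤ) (h : m < 0) : Q m = 0 := by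
  unfold Q
  haveI : IsEmpty {s : Multiset ℕ // (s.sum : ℤ) = m ∧ s.Nodup ∧ ∀ a ∈ s, 0 < a} := by
    constructor
    rintro ⟨s, hs, -⟩
    omega
  exact Nat.card_of_isEmpty

theorem Q_coeff (N n : ℕ) (h : n ≤ N) :
    PowerSeries.coeff n (∏ i ∈ Finset.range N, (1 + (PowerSeries.X : PowerSeries ℤ) ^ (i + 1)))
      = (Q n : ℤ) := by
  have e : (∏ i ∈ Finset.range N, (1 + (PowerSeries.X : PowerSeries ℤ) ^ (i + 1)))
      = ∏ i ∈ Finset.Icc 1 N, (1 + (PowerSeries.X : PowerSeries ℤ) ^ i) := by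
    rw [Finset.range_eq_Ico, Finset.prod_Ico_add' (fun i => 1 + (PowerSeries.X : PowerSeries ℤ) ^ i) 0 N 1]
    rfl
  rw [e, Finset.prod_one_add, map_sum]
  have e2 : ∀ s ∈ (Finset.Icc 1 N).powerset,
      PowerSeries.coeff n (∏ i ∈ s, (PowerSeries.X : PowerSeries ℤ) ^ i)
        = if ∑ i ∈ s, i = n then 1 else 0 := by
    intro s _
    rw [Finset.prod_pow_eq_pow_sum, PowerSeries.coeff_X_pow]
    simp only [eq_comm]
  rw [Finset.sum_congr rfl e2, Finset.sum_boole]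
  congr 1
  unfold Q
  rw [← Nat.card_eq_finsetCard]
  refine Nat.card_congr
    { toFun := fun s => ⟨s.1.val, ?_⟩
      invFun := fun m => ⟨⟨m.1, m.2.2.1⟩, ?_⟩
      left_inv := ?_
      right_inv := ?_ }
  · obtain ⟨s, hs⟩ := s
    simp only [Finset.mem_filter, Finset.mem_powerset] at hs
    refine ⟨?_, s.nodup, ?_⟩
    · exact congrArg (fun k : ℕ => (k : ℤ)) ((Finset.sum_val s).trans hs.2)
    · intro a ha
      exact (Finset.mem_Icc.1 (hs.1 ha)).1
  · obtain ⟨m, hm1, hm2, hm3⟩ := m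
    have hm1 : m.sum = n := by exact_mod_cast hm1
    simp only [Finset.mem_filter, Finset.mem_powerset]
    refine ⟨?_, ?_⟩
    · intro a ha
      have ha : a ∈ m := ha
      have := Multiset.le_sum_of_mem ha
      exact Finset.mem_Icc.2 ⟨hm3 a ha, by omega⟩
    · exact (Finset.sum_val (⟨m, hm2⟩ : Finset ℕ)).symm.trans hm1
  · intro s; rfl
  · intro m; rfl

theorem prod_near_one (M : ℕ) (s : Finset ℕ) (hs : ∀ i ∈ s, 2 * M + 1 ≤ i) :
    ∃ H : PowerSeries ℤ, ∏ i ∈ s, (1 - (PowerSeries.X : PowerSeries ℤ) ^ i)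
      = 1 + PowerSeries.X ^ (2 * M + 1) * H := by
  induction s using Finset.induction_on with
  | empty => exact ⟨0, by simp⟩
  | insert a s ha ih =>
    obtain ⟨H, hH⟩ := ih (fun i hi => hs i (Finset.mem_insert_of_mem hi))
    obtain ⟨c, hc⟩ := Nat.exists_eq_add_of_le (hs a (Finset.mem_insert_self a s))
    rw [Finset.prod_insert ha, hH, hc]
    refine ⟨H - PowerSeries.X ^ c * (1 + PowerSeries.X ^ (2 * M + 1) * H), ?_⟩
    rw [pow_add]
    ring

theorem euler_fin (M : ℕ) :
    (∏ i ∈ Finset.range (2 * M), (1 + (PowerSeries.X : PowerSeries ℤ) ^ (i + 1)))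
      * (∏ i ∈ Finset.range M, (1 - (PowerSeries.X : PowerSeries ℤ) ^ (2 * i + 1)))
      * (∏ i ∈ Finset.range M, (1 - (PowerSeries.X : PowerSeries ℤ) ^ (2 * (i + 1))))
      = ∏ i ∈ Finset.range (2 * M), (1 - (PowerSeries.X : PowerSeries ℤ) ^ (2 * (i + 1))) := by
  have h : (∏ i ∈ Finset.range M, (1 - (PowerSeries.X : PowerSeries ℤ) ^ (2 * i + 1)))
      * (∏ i ∈ Finset.range M, (1 - (PowerSeries.X : PowerSeries ℤ) ^ (2 * (i + 1))))
      = ∏ i ∈ Finset.range (2 * M), (1 - (PowerSeries.X : PowerSeries ℤ) ^ (i + 1)) := by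
    induction M with
    | zero => simp
    | succ M ih =>
      rw [show 2 * (M + 1) = 2 * M + 1 + 1 by ring, Finset.prod_range_succ, Finset.prod_range_succ,
        Finset.prod_range_succ, Finset.prod_range_succ, ← ih]
      ring
  rw [mul_assoc, h, ← Finset.prod_mul_distrib]
  refine Finset.prod_congr rfl fun i _ => ?_
  ring

theorem euler_near (M : ℕ) : ∃ H : PowerSeries ℤ,
    (∏ i ∈ Finset.range (2 * M), (1 + (PowerSeries.X : PowerSeries ℤ) ^ (i + 1)))
      * (∏ i ∈ Finset.range M, (1 - (PowerSeries.X : PowerSeries ℤ) ^ (2 * i + 1)))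
      = 1 + PowerSeries.X ^ (2 * M + 1) * H := by
  obtain ⟨H, hH⟩ := prod_near_one M ((Finset.range M).image fun i => 2 * (M + i + 1)) (by
    intro i hi
    simp only [Finset.mem_image, Finset.mem_range] at hi
    obtain ⟨a, _, rfl⟩ := hi
    omega)
  refine ⟨H, ?_⟩
  rw [← hH, Finset.prod_image (by intro a _ b _ hab; simpa using hab)]
  have h := euler_fin M
  rw [show Finset.range (2 * M) = Finset.range (M + M) by rw [two_mul]] at h
  rw [Finset.prod_range_add (fun i => 1 - (PowerSeries.X : PowerSeries ℤ) ^ (2 * (i + 1)))] at h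
  rw [mul_comm (∏ i ∈ Finset.range M, (1 - (PowerSeries.X : PowerSeries ℤ) ^ (2 * (i + 1))))] at h
  rw [two_mul]
  refine mul_right_cancel₀ ?_ h
  rw [Finset.prod_ne_zero_iff]
  intro i _ h0
  have := congrArg (PowerSeries.coeff 0) h0
  simp [PowerSeries.coeff_X_pow] at this

def R0 (n : ℕ) : ℤ :=
  if n = 0 then 1 else if 3 ≤ n ∧ n ≤ 5 then -1 else if 10 ≤ n ∧ n ≤ 14 then 1 else 0

def G : ℕ → ℕ → ℤ
  | 0, n => R0 n
  | K + 1, n => G K n + if 2 * K + 3 ≤ n then G (K + 1) (n - (2 * K + 3)) else 0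
termination_by K n => (K, n)

theorem G_succ (K n : ℕ) :
    G (K + 1) n = G K n + if 2 * K + 3 ≤ n then G (K + 1) (n - (2 * K + 3)) else 0 := by
  rw [G]

theorem G_zero (n : ℕ) : G 0 n = R0 n := by rw [G]

theorem G_series_succ (K : ℕ) :
    PowerSeries.mk (G (K + 1)) * (1 - PowerSeries.X ^ (2 * K + 3)) = PowerSeries.mk (G K) := by
  ext n
  rw [mul_sub, mul_one, map_sub, PowerSeries.coeff_mul_X_pow', PowerSeries.coeff_mk,
    PowerSeries.coeff_mk, G_succ]
  simp

theorem R0_series : PowerSeries.mk R0 * (1 - PowerSeries.X)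
    = (1 - PowerSeries.X ^ 1 - PowerSeries.X ^ 3 + PowerSeries.X ^ 6 + PowerSeries.X ^ 10
      - PowerSeries.X ^ 15 : PowerSeries ℤ) := by
  have : PowerSeries.mk R0 = (1 - PowerSeries.X ^ 3 - PowerSeries.X ^ 4 - PowerSeries.X ^ 5
      + PowerSeries.X ^ 10 + PowerSeries.X ^ 11 + PowerSeries.X ^ 12 + PowerSeries.X ^ 13
      + PowerSeries.X ^ 14 : PowerSeries ℤ) := by
    ext n
    simp only [PowerSeries.coeff_mk, map_add, map_sub, PowerSeries.coeff_X_pow,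
      PowerSeries.coeff_one, R0]
    by_cases h : n < 15
    · interval_cases n <;> simp
    · simp [show n ≠ 0 by omega, show ¬ n ≤ 5 by omega, show ¬ n ≤ 14 by omega,
        show n ≠ 3 by omega, show n ≠ 4 by omega, show n ≠ 5 by omega, show n ≠ 10 by omega,
        show n ≠ 11 by omega, show n ≠ 12 by omega, show n ≠ 13 by omega, show n ≠ 14 by omega]
  rw [this]
  ring

theorem G_series (K : ℕ) :
    PowerSeries.mk (G K) * ∏ i ∈ Finset.range (K + 1), (1 - PowerSeries.X ^ (2 * i + 1))
    = (1 - PowerSeries.X ^ 1 - PowerSeries.X ^ 3 + PowerSeries.X ^ 6 + PowerSeries.X ^ 10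
      - PowerSeries.X ^ 15 : PowerSeries ℤ) := by
  induction K with
  | zero =>
    rw [← R0_series]
    have : G 0 = R0 := by ext n; rw [G_zero]
    simp [this]
  | succ K ih =>
    rw [Finset.prod_range_succ, ← ih, ← G_series_succ K]
    rw [show 2 * (K + 1) + 1 = 2 * K + 3 by ring]
    ring

theorem Q_shift (N n d : ℕ) (h : n ≤ N) :
    PowerSeries.coeff n (PowerSeries.X ^ d *
      ∏ i ∈ Finset.range N, (1 + (PowerSeries.X : PowerSeries ℤ) ^ (i + 1)))
      = (Q ((n : ℤ) - d) : ℤ) := by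
  rw [PowerSeries.coeff_X_pow_mul']
  split_ifs with hd
  · rw [Q_coeff N (n - d) (by omega)]
    congr 2
    omega
  · rw [Q_neg _ (by omega)]
    rfl

theorem G_eq (K n : ℕ) (h : n ≤ 2 * (K + 1)) :
    G K n = (Q n : ℤ) - (Q ((n : ℤ) - 1) : ℤ) - (Q ((n : ℤ) - 3) : ℤ) + (Q ((n : ℤ) - 6) : ℤ)
        + (Q ((n : ℤ) - 10) : ℤ) - (Q ((n : ℤ) - 15) : ℤ) := by
  obtain ⟨H, hH⟩ := euler_near (K + 1)
  have h1 := G_series K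
  set D := ∏ i ∈ Finset.range (2 * (K + 1)), (1 + (PowerSeries.X : PowerSeries ℤ) ^ (i + 1)) with hD
  have h2 : PowerSeries.mk (G K) + PowerSeries.X ^ (2 * (K + 1) + 1) * (H * PowerSeries.mk (G K))
      = D - PowerSeries.X ^ 1 * D - PowerSeries.X ^ 3 * D + PowerSeries.X ^ 6 * D
        + PowerSeries.X ^ 10 * D - PowerSeries.X ^ 15 * D := by
    linear_combination (-PowerSeries.mk (G K)) * hH + D * h1
  have h3 := congrArg (PowerSeries.coeff n) h2
  simp only [map_add, map_sub] at h3
  rw [hD, Q_shift _ _ _ h, Q_shift _ _ _ h, Q_shift _ _ _ h, Q_shift _ _ _ h, Q_shift _ _ _ h,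
    Q_coeff _ _ h, PowerSeries.coeff_X_pow_mul', if_neg (by omega), PowerSeries.coeff_mk] at h3
  push_cast at h3
  linarith

/-! Finite table -/

def rowAux (s : ℕ) : List ℤ → List ℤ → List ℤ
  | [], acc => acc
  | x :: xs, acc => rowAux s xs ((x + acc.getD (s - 1) 0) :: acc)

def T : ℕ → List ℤ
  | 0 => (List.range 66).map R0
  | K + 1 => (rowAux (2 * K + 3) (T K) []).reverse

theorem rowAux_spec (s : ℕ) (hs : 0 < s) (f g : ℕ → ℤ)
    (hf : ∀ n, f n = g n + if s ≤ n then f (n - s) else 0) (k : ℕ) :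
    ∀ m, rowAux s ((List.range' m k).map g) ((List.range m).map f).reverse
      = ((List.range (m + k)).map f).reverse := by
  induction k with
  | zero => intro m; simp [rowAux]
  | succ k ih =>
    intro m
    rw [List.range'_succ, List.map_cons, rowAux]
    have : (g m + ((List.range m).map f).reverse.getD (s - 1) 0) = f m := by
      rw [hf m]
      congr 1
      split_ifs with h
      · rw [List.getD_eq_getElem _ _ (by simp; omega)]
        simp
        congr 1
        omega
      · rw [List.getD_eq_default]
        simp; omega
    rw [this]
    have e : f m :: ((List.range m).map f).reverse = ((List.range (m + 1)).map f).reverse := by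
      rw [List.range_succ]; simp
    rw [e, ih (m + 1)]
    congr 3
    ring

theorem T_eq (K : ℕ) : T K = (List.range 66).map (G K) := by
  induction K with
  | zero => rw [T]; congr 1; ext n; rw [G_zero]
  | succ K ih =>
    have := rowAux_spec (2 * K + 3) (by omega) (G (K + 1)) (G K) (G_succ K) 66 0
    rw [T, ih]
    rw [← List.range_eq_range'] at this
    simp only [List.range_zero, List.map_nil, List.reverse_nil, Nat.zero_add] at this
    rw [this, List.reverse_reverse]

theorem T_get (K n : ℕ) (h : n < 66) : G K n = (T K).getD n 0 := by
  rw [T_eq, List.getD_eq_getElem _ _ (by simpa using h)]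
  simp

theorem fin1 : ∀ n < 66, 12 ≤ n → (T 1).getD n 0 = 1 := by decide +kernel
theorem fin2 : ∀ n < 65, 60 ≤ n → 10 ≤ (T 2).getD n 0 := by decide +kernel
theorem fin3 : ∀ K < 31, 2 ≤ K → ∀ n < 60, 20 ≤ n → 0 ≤ (T K).getD n 0 := by decide +kernel
theorem fin4 : ∀ K < 31, 18 ≤ K → ∀ n < 20,
    (if n = 4 ∨ n = 8 then -1 else 0) ≤ (T K).getD n 0 := by decide +kernel
theorem fin5 : ∀ n < 60, (if n = 0 then 1 else if n = 4 ∨ n = 8 then -1 else if n < 20 then 0 else 1)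
    ≤ (T 30).getD n 0 := by decide +kernel

theorem G1 (n : ℕ) (h : 12 ≤ n) : G 1 n = 1 := by
  induction n using Nat.strong_induction_on with
  | _ n ih =>
    by_cases hn : n < 66
    · rw [T_get _ _ hn]; exact fin1 n hn h
    · rw [show (1 : ℕ) = 0 + 1 from rfl, G_succ, if_pos (by omega), G_zero]
      rw [ih _ (by omega) (by omega)]
      simp [R0, show n ≠ 0 by omega, show ¬ n ≤ 5 by omega, show ¬ n ≤ 14 by omega]

theorem G2 (n : ℕ) (h : 60 ≤ n) : 10 ≤ G 2 n := by
  induction n using Nat.strong_induction_on with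
  | _ n ih =>
    by_cases hn : n < 65
    · rw [T_get _ _ (by omega)]; exact fin2 n hn h
    · rw [show (2 : ℕ) = 1 + 1 from rfl, G_succ, if_pos (by omega), G1 n (by omega)]
      have := ih (n - (2 * 1 + 3)) (by omega) (by omega)
      simp only [Nat.reduceAdd] at *
      linarith

theorem Gmid (K : ℕ) (h2 : 2 ≤ K) (h18 : K ≤ 18) : ∀ n, 60 ≤ n → 10 ≤ G K n := by
  induction K, h2 using Nat.le_induction with
  | base => exact G2
  | succ K hK ih =>
    intro n
    induction n using Nat.strong_induction_on with
    | _ n ihn =>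
      intro hn
      rw [G_succ, if_pos (by omega)]
      have a := ih (by omega) n hn
      have b : 0 ≤ G (K + 1) (n - (2 * K + 3)) := by
        by_cases hm : n - (2 * K + 3) < 60
        · rw [T_get _ _ (by omega)]
          exact fin3 _ (by omega) (by omega) _ hm (by omega)
        · have := ihn (n - (2 * K + 3)) (by omega) (by omega)
          linarith
      linarith

theorem Gstable (K : ℕ) (h : 30 ≤ K) (n : ℕ) (hn : n < 60) : G K n = G 30 n := by
  induction K, h using Nat.le_induction with
  | base => rfl
  | succ K hK ih => rw [G_succ, if_neg (by omega), ih, add_zero]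

theorem Gsmall (K : ℕ) (h : 18 ≤ K) (n : ℕ) (hn : n < 60) :
    (if n = 4 ∨ n = 8 then -1 else 0) ≤ G K n := by
  have key : ∀ K, 18 ≤ K → K < 31 → (if n = 4 ∨ n = 8 then -1 else 0) ≤ G K n := by
    intro K h h'
    rw [T_get _ _ (by omega)]
    by_cases h20 : n < 20
    · exact fin4 K h' h n h20
    · rw [if_neg (by omega)]
      exact fin3 K h' (by omega) n hn (by omega)
  by_cases hK : K < 31
  · exact key K h hK
  · rw [Gstable K (by omega) n hn]
    exact key 30 (by omega) (by omega)

theorem Gbig (K : ℕ) (h : 18 ≤ K) : ∀ n, 60 ≤ n →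
    8 + (if 2 * K + 5 < n then 1 else 0) + (if 2 * K + 9 < n then 1 else 0) ≤ G K n := by
  induction K, h using Nat.le_induction with
  | base =>
    intro n hn
    have := Gmid 18 (by omega) (by omega) n hn
    split_ifs <;> linarith
  | succ K hK ih =>
    intro n
    induction n using Nat.strong_induction_on with
    | _ n ihn =>
      intro hn
      have a := ih n hn
      have b : 2 * K + 3 ≤ n → (if n - (2 * K + 3) = 4 ∨ n - (2 * K + 3) = 8 then -1 else 0)
          ≤ G (K + 1) (n - (2 * K + 3)) := by
        intro hle
        by_cases hm : n - (2 * K + 3) < 60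
        · exact Gsmall _ (by omega) _ hm
        · have := ihn (n - (2 * K + 3)) (by omega) (by omega)
          rw [if_neg (by omega)]
          refine le_trans ?_ this
          split_ifs <;> norm_num
      rw [G_succ]
      generalize G (K + 1) (n - (2 * K + 3)) = y at *
      generalize G K n = x at *
      by_cases hle : 2 * K + 3 ≤ n
      · have b := b hle
        rw [if_pos hle]
        split_ifs at * <;> omega
      · rw [if_neg hle]
        split_ifs at * <;> omega

theorem stmt18
    (ρ : ℤ → ℤ)
    (hρ1 : ∀ i : ℤ, ρ (4 * (i * (3 * i - 1) / 2)) = (-1) ^ i.natAbs)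
    (hρ2 : ∀ m : ℤ, (∀ i : ℤ, m ≠ 4 * (i * (3 * i - 1) / 2)) → ρ m = 0)
    (n : ℤ) (hn : 0 ≤ n) :
    0 ≤ (Q n : ℤ) - (Q (n - 1) : ℤ) - (Q (n - 3) : ℤ) + (Q (n - 6) : ℤ)
        + (Q (n - 10) : ℤ) - (Q (n - 15) : ℤ) - ρ n := by
  have hle : ρ n ≤ 1 := by
    by_cases h : ∃ i : ℤ, n = 4 * (i * (3 * i - 1) / 2)
    · obtain ⟨i, rfl⟩ := h
      rw [hρ1]
      rcases neg_one_pow_eq_or ℤ i.natAbs with h | h <;> rw [h] <;> norm_num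
    · push Not at h
      rw [hρ2 n h]; norm_num
  obtain ⟨m, rfl⟩ := Int.eq_ofNat_of_zero_le hn
  by_cases hm : m < 60
  · rw [← G_eq 30 m (by omega), T_get _ _ (by omega)]
    have h5 := fin5 m hm
    suffices hs : ρ m ≤ (if m = 0 then 1 else if m = 4 ∨ m = 8 then -1 else if m < 20 then 0 else 1) by
      linarith
    by_cases h20 : 20 ≤ m
    · rw [if_neg (by omega), if_neg (by omega), if_neg (by omega)]; exact hle
    · have e1 := hρ1 0
      have e2 := hρ1 1
      have e3 := hρ1 (-1)
      norm_num at e1 e2 e3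
      by_cases h : ∃ i : ℤ, (m : ℤ) = 4 * (i * (3 * i - 1) / 2)
      · obtain ⟨i, hi⟩ := h
        have hb : i * (3 * i - 1) < 12 := by omega
        have : i < 3 := by nlinarith
        have : -2 < i := by nlinarith
        interval_cases i
        · have : m = 8 := by norm_num at hi; omega
          subst this; norm_num; exact e3.le
        · have : m = 0 := by norm_num at hi; omega
          subst this; norm_num; exact e1.le
        · have : m = 4 := by norm_num at hi; omega
          subst this; norm_num; exact e2.le
        · norm_num at hi; omega
      · push Not at h
        rw [hρ2 m h]
        split_ifs with a b c
        · norm_num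
        · exfalso
          rcases b with b | b
          · exact h 1 (by subst b; norm_num)
          · exact h (-1) (by subst b; norm_num)
        · norm_num
        · norm_num
  · rw [← G_eq m m (by omega)]
    have := Gbig m (by omega) m (by omega)
    split_ifs at this <;> linarith
end

section
/- Let k ≥ 1 and n ≥ 0 be integers. Then Σ_{j=k}^{∞} ( g(n − (15j² − j)/2) − g(n − (15j² + 11j + 2)/2) ) equals the number of pairs (j, λ) where j ≥ k is an integer and λ is a partition of n − (15j² − j)/2 all of whose parts are congruent to 1 or 4 modulo 5 and in which the part 1 occurs at most 6j times. (This is the combinatorial interpretation of Merca's sum u⁺_{g,1}(n) = Σ_{j=k}^{∞} ( g(n − 5j(3j+1)/2 + 3j) − g(n − 5j(3j+1)/2 − (3j+1)) ).) -/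
/-- `g5 m` is the number of partitions of `m` all of whose parts are congruent to
`1` or `4` mod `5`, with `g5 m = 0` for `m < 0`. A partition is a multiset of
positive parts. -/
noncomputable def g5 (m : ℤ) : ℕ :=
  Nat.card {s : Multiset ℕ // (s.sum : ℤ) = m ∧ ∀ a ∈ s, 0 < a ∧ (a % 5 = 1 ∨ a % 5 = 4)}

theorem fin_aux (m : ℤ) :
    {s : Multiset ℕ | (s.sum : ℤ) = m ∧ ∀ a ∈ s, 0 < a ∧ (a % 5 = 1 ∨ a % 5 = 4)}.Finite := by
  refine (Set.finite_range (fun p : Nat.Partition m.toNat => p.parts)).subset ?_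
  rintro s ⟨h1, h2⟩
  exact ⟨⟨s, fun {a} ha => (h2 a ha).1, by omega⟩, rfl⟩

theorem g5_aux (m : ℤ) (c : ℕ) :
    (g5 m : ℤ) - (g5 (m - (c + 1)) : ℤ) =
      (Nat.card {s : Multiset ℕ // (s.sum : ℤ) = m ∧
        (∀ a ∈ s, 0 < a ∧ (a % 5 = 1 ∨ a % 5 = 4)) ∧ s.count 1 ≤ c} : ℤ) := by
  let A := {s : Multiset ℕ | (s.sum : ℤ) = m ∧ ∀ a ∈ s, 0 < a ∧ (a % 5 = 1 ∨ a % 5 = 4)}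
  let D := {s : Multiset ℕ | (s.sum : ℤ) = m - (c + 1) ∧
    ∀ a ∈ s, 0 < a ∧ (a % 5 = 1 ∨ a % 5 = 4)}
  let B := {s : Multiset ℕ | (s.sum : ℤ) = m ∧
        (∀ a ∈ s, 0 < a ∧ (a % 5 = 1 ∨ a % 5 = 4)) ∧ s.count 1 ≤ c}
  have hA : A.Finite := fin_aux m
  have hBA : B ⊆ A := fun s hs => ⟨hs.1, hs.2.1⟩
  have hD : A \ B = (fun s => s + Multiset.replicate (c + 1) 1) '' D := by
    ext s
    constructor
    · rintro ⟨⟨h1, h2⟩, h3⟩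
      have h4 : c + 1 ≤ s.count 1 := by
        by_contra h
        exact h3 ⟨h1, h2, by omega⟩
      obtain ⟨t, ht⟩ := Multiset.le_iff_exists_add.1 (Multiset.le_count_iff_replicate_le.1 h4)
      subst ht
      refine ⟨t, ⟨?_, fun a ha => h2 a (Multiset.mem_add.2 (Or.inr ha))⟩, add_comm _ _⟩
      rw [Multiset.sum_add, Multiset.sum_replicate, smul_eq_mul] at h1
      omega
    · rintro ⟨t, ⟨h1, h2⟩, rfl⟩
      refine ⟨⟨?_, ?_⟩, ?_⟩
      · rw [Multiset.sum_add, Multiset.sum_replicate, smul_eq_mul]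
        omega
      · intro a ha
        rcases Multiset.mem_add.1 ha with h | h
        · exact h2 a h
        · rw [Multiset.eq_of_mem_replicate h]
          simp
      · rintro ⟨_, _, h⟩
        rw [Multiset.count_add, Multiset.count_replicate_self] at h
        omega
  have e1 : g5 m = A.ncard := rfl
  have e2 : g5 (m - (c + 1)) = D.ncard := rfl
  have e3 : (A \ B).ncard = D.ncard := by
    rw [hD]
    exact Set.ncard_image_of_injective _ (fun a b h => add_right_cancel h)
  have e4 := Set.ncard_sdiff_add_ncard_of_subset hBA hA
  change _ = (B.ncard : ℤ)
  rw [e1, e2]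
  omega

/-- For `k ≥ 1` and `n ≥ 0`,
`Σ_{j=k}^∞ (g(n − (15j² − j)/2) − g(n − (15j² + 11j + 2)/2))` equals the number of
pairs `(j, λ)` with `j ≥ k` and `λ` a partition of `n − (15j² − j)/2` all of whose
parts are `≡ 1` or `4 (mod 5)` and in which the part `1` occurs at most `6j` times. -/
theorem stmt19 (k : ℕ) (hk : 1 ≤ k) (n : ℤ) (hn : 0 ≤ n) :
    (∑' j : {j : ℕ // k ≤ j},
        ((g5 (n - (15 * (j.1 : ℤ) ^ 2 - (j.1 : ℤ)) / 2) : ℤ) -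
         (g5 (n - (15 * (j.1 : ℤ) ^ 2 + 11 * (j.1 : ℤ) + 2) / 2) : ℤ))) =
    (Nat.card {x : ℕ × Multiset ℕ //
        k ≤ x.1 ∧ (x.2.sum : ℤ) = n - (15 * (x.1 : ℤ) ^ 2 - (x.1 : ℤ)) / 2 ∧
        (∀ a ∈ x.2, 0 < a ∧ (a % 5 = 1 ∨ a % 5 = 4)) ∧
        x.2.count 1 ≤ 6 * x.1} : ℤ) := by
  have hj (j : ℕ) : n - (15 * (j : ℤ) ^ 2 + 11 * (j : ℤ) + 2) / 2 =
      (n - (15 * (j : ℤ) ^ 2 - (j : ℤ)) / 2) - (((6 * j : ℕ) : ℤ) + 1) := by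
    push_cast
    generalize (j : ℤ) ^ 2 = q
    omega
  let P (j : ℕ) (s : Multiset ℕ) : Prop := (s.sum : ℤ) = n - (15 * (j : ℤ) ^ 2 - (j : ℤ)) / 2 ∧
        (∀ a ∈ s, 0 < a ∧ (a % 5 = 1 ∨ a % 5 = 4)) ∧ s.count 1 ≤ 6 * j
  let C (j : ℕ) : ℤ := (Nat.card {s : Multiset ℕ // P j s} : ℤ)
  have hP : ∀ j s, P j s → j ≤ n.toNat := by
    rintro j s ⟨h, _⟩
    have h1 : (j : ℤ) ≤ (j : ℤ) ^ 2 := by exact_mod_cast Nat.le_self_pow two_ne_zero j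
    generalize (j : ℤ) ^ 2 = q at *
    omega
  have hfin : ∀ j, Finite {s : Multiset ℕ // P j s} := fun j =>
    ((fin_aux (n - (15 * (j : ℤ) ^ 2 - (j : ℤ)) / 2)).subset (s := _) (t := {s | P j s})
      (fun s hs => ⟨hs.1, hs.2.1⟩)).to_subtype
  have hL : ∀ j : {j : ℕ // k ≤ j},
      ((g5 (n - (15 * (j.1 : ℤ) ^ 2 - (j.1 : ℤ)) / 2) : ℤ) -
         (g5 (n - (15 * (j.1 : ℤ) ^ 2 + 11 * (j.1 : ℤ) + 2) / 2) : ℤ)) = C j.1 := by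
    intro j
    rw [hj]
    exact g5_aux _ _
  rw [tsum_congr hL]
  have hsub : (∑' j : {j : ℕ // k ≤ j}, C j.1) = ∑' j : ℕ, Set.indicator {j | k ≤ j} C j :=
    tsum_subtype {j : ℕ | k ≤ j} C
  have hsum : (∑' j : ℕ, Set.indicator {j | k ≤ j} C j) = ∑ j ∈ Finset.Icc k n.toNat, C j := by
    rw [tsum_eq_sum (s := Finset.Icc k n.toNat)]
    · refine Finset.sum_congr rfl fun j hj => ?_
      exact Set.indicator_of_mem (s := {j | k ≤ j}) (Finset.mem_Icc.1 hj).1 C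
    · intro j hj
      by_cases hkj : k ≤ j
      · have : IsEmpty {s : Multiset ℕ // P j s} :=
          ⟨fun s => hj (Finset.mem_Icc.2 ⟨hkj, hP j _ s.2⟩)⟩
        rw [Set.indicator_of_mem (s := {j | k ≤ j}) hkj]
        simp [C]
      · exact Set.indicator_of_notMem (s := {j | k ≤ j}) hkj C
  rw [hsub, hsum]
  let e : {x : ℕ × Multiset ℕ // k ≤ x.1 ∧ P x.1 x.2} ≃
      (Σ j : Finset.Icc k n.toNat, {s : Multiset ℕ // P j.1 s}) :=
    { toFun := fun x => ⟨⟨x.1.1, Finset.mem_Icc.2 ⟨x.2.1, hP _ _ x.2.2⟩⟩, ⟨x.1.2, x.2.2⟩⟩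
      invFun := fun y => ⟨(y.1.1, y.2.1), (Finset.mem_Icc.1 y.1.2).1, y.2.2⟩
      left_inv := fun x => rfl
      right_inv := fun y => rfl }
  change _ = (Nat.card {x : ℕ × Multiset ℕ // k ≤ x.1 ∧ P x.1 x.2} : ℤ)
  rw [Nat.card_congr e, Nat.card_sigma, Nat.cast_sum]
  exact (Finset.sum_coe_sort (Finset.Icc k n.toNat) C).symm
end
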